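/- For each integer r ≥ 1, let S_r be a set of residue classes modulo r (each residue class viewed as a subset of the non-negative integers), and suppose that for each r ∈ {1,2,3,4,5,7}, S_r is either empty or consists of all r residue classes modulo r. Then there exists a non-empty quasi-finite family 𝓕 of finite graphs, each having at least one edge, such that: (a) for every integer r ≥ 1 there is a constant K_r such that |sat(n,𝓕) − (1 − 1/r)·n| ≤ K_r for every n that lies in some class of S_r but lies in no class of S_q for any q < r; (b) there is a function g : ℤ_{≥0} → ℝ with g(n)/n → 0 such that sat(n,𝓕) ≥ n − g(n) for every n ≥ 0 that lies in no class of any S_r; (c) if there are only finitely many integers r ≥ 1 for which some non-negative integer lies in a class of S_r but in no class of S_q for any q < r, then 𝓕 can moreover be taken to be finite. -/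

import Mathlib

open SimpleGraph Filter Topology

/-- `H` (on `β`) is contained in `G` (on `α`): `G` has a subgraph isomorphic to `H`. -/
def Contains {α β : Type*} (G : SimpleGraph α) (H : SimpleGraph β) : Prop :=
  ∃ f : β ↪ α, ∀ a b : β, H.Adj a b → G.Adj (f a) (f b)

/-- A family of finite graphs, each given on a vertex set `Fin n`. -/
abbrev GraphFam := Set ((n : ℕ) × SimpleGraph (Fin n))

/-- `G` is `𝓕`-saturated: `G` contains no member of `𝓕`, but adding any missing edge to `G`
creates a member of `𝓕`. -/
def FamSaturated (𝓕 : GraphFam) {α : Type*} (G : SimpleGraph α) : Prop :=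
  (∀ F ∈ 𝓕, ¬ Contains G F.2) ∧
    ∀ u v : α, u ≠ v → ¬ G.Adj u v →
      ∃ F ∈ 𝓕, Contains (G ⊔ SimpleGraph.fromEdgeSet {s(u, v)}) F.2

/-- `sat n 𝓕` is the minimum number of edges in an `𝓕`-saturated graph on `n` vertices. -/
noncomputable def sat (n : ℕ) (𝓕 : GraphFam) : ℕ :=
  sInf {m | ∃ G : SimpleGraph (Fin n), FamSaturated 𝓕 G ∧ Nat.card G.edgeSet = m}

/-- `𝓕` is quasi-finite: for every tree `T` there is a constant `C` such that every graph in `𝓕`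
has at most `C` connected components isomorphic to `T`. -/
def QuasiFinite (𝓕 : GraphFam) : Prop :=
  ∀ (t : ℕ) (T : SimpleGraph (Fin t)), T.IsTree →
    ∃ C : ℕ, ∀ F ∈ 𝓕,
      Nat.card {c : F.2.ConnectedComponent // Nonempty (SimpleGraph.induce c.supp F.2 ≃g T)} ≤ C

/-- `C` is a residue class modulo `r`, viewed as a subset of the non-negative integers. -/
def ResidueClass (r : ℕ) (C : Set ℕ) : Prop := ∃ c < r, C = {n : ℕ | n % r = c}

/-!
A class modulo `r = ρ + 1` is encoded by a cycle whose length lies in that class and determines it,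
together with a monotone, locally testable "gadget" property for which disjoint copies of a fixed
tree `τ` on `r` vertices are edge-maximal. Call a graph admissible if it has no triangle, its cycles
of the coding lengths are components any two of which meet, and removing such a cycle leaves a graph
good for its gadget; `𝓕` consists of the minimal graphs that are not admissible.

For `n` in the class, the coding cycle together with copies of `τ` is saturated and has about
`(1 - 1 / r) n` edges. For the lower bound, the number of edges of a saturated graph is at least `n`
minus its number of tree components. If it had many tree components, two would have the same small
size. An edge between them creates no cycle, so some coding cycle must be present and its gadget
must forbid the edge; this bounds the size of the two trees below by the modulus `r`. If the gadget
is strong enough it also forces all components other than the cycle to have exactly `r` vertices, so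
that `n` lies in the class. Such gadgets exist for `r = 6` and `r ≥ 8`, built from a double star if
`r` is even and from a spider if `r` is odd. For `r ∈ {1, 2, 3, 4, 5, 7}` stars suffice, because
there all classes or none are prescribed.
-/

section Graphs

variable {V W : Type*}

theorem contains_iff_isContained {G : SimpleGraph V} {H : SimpleGraph W} :
    Contains G H ↔ H ⊑ G :=
  ⟨fun ⟨f, hf⟩ => ⟨⟨⟨f, hf _ _⟩, f.injective⟩⟩,
    fun ⟨f⟩ => ⟨f.toEmbedding, fun _ _ h => f.toHom.map_adj h⟩⟩

theorem sup_edge_adj {G : SimpleGraph V} {u v x y : V} :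
    (G ⊔ edge u v).Adj x y ↔ G.Adj x y ∨ (x ≠ y ∧ (x = u ∧ y = v ∨ x = v ∧ y = u)) := by
  rw [sup_adj, edge_adj]
  tauto

theorem sup_edge_comm (G : SimpleGraph V) (u v : V) : G ⊔ edge u v = G ⊔ edge v u := by
  rw [edge_comm]

/-- The degree of a vertex; unlike `SimpleGraph.degree` it needs no finiteness instance
(junk value `0` at vertices of infinite degree). -/
noncomputable def deg (G : SimpleGraph V) (v : V) : ℕ := (G.neighborSet v).ncard

theorem card_le_deg [Finite V] {ι : Type*} {G : SimpleGraph V} {x : V} {f : ι → V}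
    (hf : Function.Injective f) (h : ∀ i, G.Adj x (f i)) : Nat.card ι ≤ deg G x := by
  rw [← Nat.card_range_of_injective hf]
  exact Set.ncard_le_ncard (Set.range_subset_iff.2 h)

theorem deg_le_deg_apply [Finite V] {G : SimpleGraph V} {H : SimpleGraph W} (f : H.Copy G)
    (a : W) : deg H a ≤ deg G (f a) :=
  Set.ncard_le_ncard_of_injOn f (fun _ hb => f.toHom.map_adj hb) f.injective.injOn (Set.toFinite _)

theorem deg_sup_edge_of_ne {G : SimpleGraph V} {u v x : V} (hu : x ≠ u) (hv : x ≠ v) :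
    deg (G ⊔ edge u v) x = deg G x := by
  have : (G ⊔ edge u v).neighborSet x = G.neighborSet x := by
    ext y
    simp only [mem_neighborSet, sup_edge_adj]
    tauto
  rw [deg, this, deg]

theorem deg_sup_edge_right_le [Finite V] (G : SimpleGraph V) (u v : V) :
    deg (G ⊔ edge u v) v ≤ deg G v + 1 := by
  refine (Set.ncard_le_ncard (t := insert u (G.neighborSet v)) (fun y hy => ?_)
    (Set.toFinite _)).trans (Set.ncard_insert_le u _)
  simp only [mem_neighborSet, sup_edge_adj] at hy
  rw [Set.mem_insert_iff, mem_neighborSet]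
  tauto

theorem deg_induce (G : SimpleGraph V) {S : Set V} (x : S) :
    deg (G.induce S) x = (G.neighborSet x ∩ S).ncard := by
  rw [deg, ← Set.ncard_image_of_injective _ Subtype.val_injective]
  congr 1
  ext y
  simp only [Set.mem_image, mem_neighborSet, induce_adj, Subtype.exists, Set.mem_inter_iff]
  grind

/-- The corestriction of a copy of `H` in `G` to a vertex set containing its image. -/
def copyToInduce {G : SimpleGraph V} {H : SimpleGraph W} (f : H.Copy G) {S : Set V}
    (hS : Set.range f ⊆ S) : H.Copy (G.induce S) :=
  ⟨⟨fun a => ⟨f a, hS ⟨a, rfl⟩⟩, fun h => f.toHom.map_adj h⟩,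
    fun _ _ h => f.injective (congrArg Subtype.val h)⟩

theorem induce_singleton_preconnected (G : SimpleGraph V) (v : V) :
    (G.induce {v}).Preconnected :=
  Preconnected.of_subsingleton

theorem connected_induce_range {G : SimpleGraph V} {H : SimpleGraph W} (hH : H.Connected)
    (f : H →g G) : (G.induce (Set.range f)).Connected := by
  let φ : H →g G.induce (Set.range f) := ⟨fun a => ⟨f a, a, rfl⟩, fun h => f.map_adj h⟩
  exact hH.map φ fun ⟨_, a, ha⟩ => ⟨a, Subtype.ext ha⟩

/-- Adjoining to `A` up to `k` neighbours of each of its vertices keeps the truncated degrees. -/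
theorem exists_connected_superset [Finite V] (G : SimpleGraph V) {A : Set V}
    (hA : (G.induce A).Connected) (k : ℕ) :
    ∃ S, A ⊆ S ∧ (G.induce S).Connected ∧ S.ncard ≤ A.ncard * (k + 1) ∧
      ∀ x : S, x.1 ∈ A → min k (deg G x) ≤ deg (G.induce S) x := by
  classical
  have := Fintype.ofFinite V
  choose N hN hcard using fun a => Set.exists_subset_card_eq (min_le_right k (deg G a))
  refine ⟨A ∪ ⋃ a ∈ A.toFinset, N a, Set.subset_union_left, ?_, ?_, ?_⟩
  · obtain ⟨u, hu⟩ := hA.nonempty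
    refine induce_connected_of_patches u (.inl hu) fun {v} hv => ?_
    rcases hv with hv | hv
    · exact ⟨A, Set.subset_union_left, hu, hv, hA.preconnected _ _⟩
    · obtain ⟨a, ha, hva⟩ := Set.mem_iUnion₂.1 hv
      have hconn := connected_induce_union hA.preconnected (induce_singleton_preconnected G v)
        (Set.mem_toFinset.1 ha) (Set.mem_singleton v) (hN a hva)
      exact ⟨A ∪ {v}, Set.union_subset_union_right _ (Set.singleton_subset_iff.2 hv), .inl hu,
        .inr rfl, hconn.preconnected _ _⟩
  · have hsum : (⋃ a ∈ A.toFinset, N a).ncard ≤ A.ncard * k := by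
      refine (Finset.set_ncard_biUnion_le _ _).trans ?_
      rw [Set.ncard_eq_toFinset_card', ← smul_eq_mul]
      exact Finset.sum_le_card_nsmul _ _ _ fun a _ => (hcard a).trans_le (min_le_left _ _)
    calc _ ≤ A.ncard + A.ncard * k := (Set.ncard_union_le _ _).trans (by omega)
      _ = _ := by ring
  · intro x hx
    rw [deg_induce, ← hcard]
    exact Set.ncard_le_ncard (Set.subset_inter (hN _) fun y hy =>
      .inr (Set.mem_iUnion₂.2 ⟨x, Set.mem_toFinset.2 hx, hy⟩))

/-- A set of vertices that no edge leaves. -/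
def AdjClosed (G : SimpleGraph V) (D : Set V) : Prop := ∀ x ∈ D, ∀ y, G.Adj x y → y ∈ D

theorem AdjClosed.compl {G : SimpleGraph V} {D : Set V} (h : AdjClosed G D) : AdjClosed G Dᶜ :=
  fun x hx y hxy hy => hx (h y hy x hxy.symm)

theorem AdjClosed.mem_of_reachable {G : SimpleGraph V} {D : Set V} (h : AdjClosed G D) {x y : V}
    (hx : x ∈ D) (hxy : G.Reachable x y) : y ∈ D := by
  obtain ⟨p⟩ := hxy
  induction p with
  | nil => exact hx
  | cons hadj _ ih => exact ih (h _ hx _ hadj)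

theorem AdjClosed.subset_of_connected {G : SimpleGraph V} {D S : Set V} (h : AdjClosed G D)
    (hS : (G.induce S).Connected) {x : V} (hxS : x ∈ S) (hx : x ∈ D) : S ⊆ D := fun y hy =>
  h.mem_of_reachable hx ((hS.preconnected ⟨x, hxS⟩ ⟨y, hy⟩).map (Embedding.induce S).toHom)

/-- The vertex set of a connected component, as a minimal nonempty closed set; this form passes
easily to induced subgraphs. -/
structure IsComponent (G : SimpleGraph V) (D : Set V) : Prop where
  nonempty : D.Nonempty
  closed : AdjClosed G D
  minimal : ∀ D' ⊆ D, D'.Nonempty → AdjClosed G D' → D' = D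

/-- `D` induces a forest, in the form of 1-degeneracy: every nonempty subset of `D` has a vertex
with at most one neighbour inside the subset. -/
def IsForestOn (G : SimpleGraph V) (D : Set V) : Prop :=
  ∀ Z ⊆ D, Z.Nonempty → ∃ x ∈ Z, ∀ y ∈ Z, ∀ z ∈ Z, G.Adj x y → G.Adj x z → y = z

end Graphs

section Cycles

variable {V W : Type*} {G : SimpleGraph V} {s : ℕ}

/-- `f` traces a cycle of length `s` in `G` (for `3 ≤ s`). -/
def IsCycleMap (G : SimpleGraph V) (f : ZMod s → V) : Prop :=
  Function.Injective f ∧ ∀ i, G.Adj (f i) (f (i + 1))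

theorem IsCycleMap.map {H : SimpleGraph W} {f : ZMod s → W} (h : IsCycleMap H f) (g : H.Copy G) :
    IsCycleMap G (g ∘ f) :=
  ⟨g.injective.comp h.1, fun i => g.toHom.map_adj (h.2 i)⟩

theorem IsCycleMap.adj_sub_one {f : ZMod s → V} (h : IsCycleMap G f) (i : ZMod s) :
    G.Adj (f i) (f (i - 1)) := by
  simpa using (h.2 (i - 1)).symm

theorem IsCycleMap.induce {f : ZMod s → V} (h : IsCycleMap G f) {S : Set V}
    (hS : ∀ k, f k ∈ S) : IsCycleMap (G.induce S) (fun k => ⟨f k, hS k⟩) :=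
  ⟨fun _ _ hab => h.1 (congrArg Subtype.val hab), h.2⟩

theorem zmod_add_one_ne_sub_one (hs : 3 ≤ s) (i : ZMod s) : i + 1 ≠ i - 1 := by
  intro h
  have h2 : ((2 : ℕ) : ZMod s) = 0 := by
    push_cast
    linear_combination h
  have := Nat.le_of_dvd two_pos ((ZMod.natCast_eq_zero_iff _ _).1 h2)
  omega

theorem zmod_induction [NeZero s] {p : ZMod s → Prop} (i : ZMod s) (hi : p i)
    (h : ∀ j, p j → p (j + 1)) (j : ZMod s) : p j := by
  have key (k : ℕ) : p (i + k) := by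
    induction k with
    | zero => simpa using hi
    | succ k ih => simpa [add_assoc] using h _ ih
  simpa using key (j - i).val

theorem ncard_range_zmod [NeZero s] {f : ZMod s → V} (hf : Function.Injective f) :
    (Set.range f).ncard = s := by
  rw [← Set.image_univ, Set.ncard_image_of_injective _ hf, Set.ncard_univ, Nat.card_zmod]

theorem IsCycleMap.connected_induce_range [NeZero s] {f : ZMod s → V} (h : IsCycleMap G f) :
    (G.induce (Set.range f)).Connected := by
  refine induce_connected_of_patches (f 0) ⟨0, rfl⟩ ?_
  rintro _ ⟨k, rfl⟩
  refine ⟨_, subset_rfl, ⟨0, rfl⟩, ⟨k, rfl⟩, ?_⟩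
  have h' := h.induce (S := Set.range f) fun k => ⟨k, rfl⟩
  exact zmod_induction
    (p := fun k => (G.induce (Set.range f)).Reachable ⟨f 0, 0, rfl⟩ ⟨f k, k, rfl⟩) 0
    (Reachable.refl _) (fun j hj => hj.trans (h'.2 j).reachable) k

theorem IsCycleMap.not_isForestOn (hs : 3 ≤ s) {f : ZMod s → V} (h : IsCycleMap G f) :
    ¬ IsForestOn G (Set.range f) := by
  intro hD
  obtain ⟨_, ⟨i, rfl⟩, hx⟩ := hD _ subset_rfl ⟨f 0, 0, rfl⟩
  exact zmod_add_one_ne_sub_one hs i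
    (h.1 (hx _ ⟨i + 1, rfl⟩ _ ⟨i - 1, rfl⟩ (h.2 i) (h.adj_sub_one i)))

theorem IsCycleMap.range_subset [NeZero s] {f : ZMod s → V} (h : IsCycleMap G f) {D : Set V}
    (hD : AdjClosed G D) {i : ZMod s} (hi : f i ∈ D) : Set.range f ⊆ D :=
  Set.range_subset_iff.2 <|
    zmod_induction (p := fun j => f j ∈ D) i hi fun j hj => hD _ hj _ (h.2 j)

/-- Going once around the cycle from the far end of the new edge, one never leaves `D`. -/
private theorem IsCycleMap.not_traverses (hs : 3 ≤ s) {f : ZMod s → V} {u v : V} {D : Set V}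
    (h : IsCycleMap (G ⊔ edge u v) f) (hD : AdjClosed G D) (hu : u ∉ D) (hv : v ∈ D) (i : ZMod s) :
    ¬ (f i = u ∧ f (i + 1) = v) := by
  have : NeZero s := ⟨by omega⟩
  rintro ⟨rfl, rfl⟩
  refine hu (zmod_induction (p := fun j => f j ∈ D) (i + 1) hv (fun j hj => ?_) i)
  rcases sup_edge_adj.1 (h.2 j) with h1 | ⟨-, ⟨h1, -⟩ | ⟨h1, h2⟩⟩
  · exact hD _ hj _ h1
  · exact absurd (h1 ▸ hj) hu
  · obtain rfl := h.1 h1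
    exact absurd (by linear_combination h.1 h2) (zmod_add_one_ne_sub_one hs i)

/-- An edge leaving a closed set is a bridge, so it lies on no cycle. -/
theorem IsCycleMap.of_sup_edge (hs : 3 ≤ s) {f : ZMod s → V} {u v : V} {D : Set V}
    (h : IsCycleMap (G ⊔ edge u v) f) (hD : AdjClosed G D) (hu : u ∉ D) (hv : v ∈ D) :
    IsCycleMap G f := by
  refine ⟨h.1, fun i => ?_⟩
  rcases sup_edge_adj.1 (h.2 i) with h1 | ⟨-, h1 | h1⟩
  · exact h1
  · exact absurd h1 (h.not_traverses hs hD hu hv i)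
  · rw [sup_edge_comm] at h
    exact absurd h1 (h.not_traverses hs hD.compl (by simpa using hv) hu i)

end Cycles

section FunctionGraphs

variable {V τ : Type*}

/-- The graph joining every vertex to its image under `F`; with `F` the parent map of a rooted tree
this encodes the tree, and a rotation encodes a cycle. -/
def functionGraph (F : V → V) : SimpleGraph V where
  Adj x y := x ≠ y ∧ (F x = y ∨ F y = x)
  symm := ⟨fun _ _ h => ⟨h.1.symm, h.2.symm⟩⟩
  loopless := ⟨fun _ h => h.1 rfl⟩

theorem isForestOn_functionGraph [Finite V] {F : V → V} {D : Set V} (rank : V → ℕ)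
    (h : ∀ x ∈ D, F x ≠ x → rank (F x) < rank x) : IsForestOn (functionGraph F) D := by
  intro Z hZ hne
  obtain ⟨x, hx, hmax⟩ := Set.exists_max_image Z rank (Set.toFinite _) hne
  have eq_parent : ∀ y ∈ Z, (functionGraph F).Adj x y → y = F x := by
    rintro y hy ⟨hxy, h1 | h1⟩
    · exact h1.symm
    · have := h y (hZ hy) (by rwa [h1])
      rw [h1] at this
      exact absurd (hmax y hy) (by omega)
  exact ⟨x, hx, fun y hy z hz hxy hxz => (eq_parent y hy hxy).trans (eq_parent z hz hxz).symm⟩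

theorem card_edgeSet_functionGraph_le [Finite V] (F : V → V) :
    Nat.card (functionGraph F).edgeSet ≤ {x | F x ≠ x}.ncard := by
  rw [Nat.card_coe_set_eq]
  refine (Set.ncard_le_ncard (t := (fun x => s(x, F x)) '' {x | F x ≠ x}) ?_
    (Set.toFinite _)).trans (Set.ncard_image_le (Set.toFinite _))
  intro e
  induction e using Sym2.ind with | _ x y
  intro h
  obtain ⟨hxy, rfl | rfl⟩ := (mem_edgeSet _).1 h
  · exact ⟨x, hxy.symm, rfl⟩
  · exact ⟨y, hxy, Sym2.eq_swap⟩

theorem connected_functionGraph {F : V → V} {root : V} (rank : V → ℕ)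
    (h : ∀ x, x ≠ root → rank (F x) < rank x) : (functionGraph F).Connected := by
  rw [connected_iff_exists_forall_reachable]
  refine ⟨root, fun x => ?_⟩
  induction hn : rank x using Nat.strong_induction_on generalizing x with
  | _ n ih =>
    by_cases hx : x = root
    · rw [hx]
    · have hlt := h x hx
      have hadj : (functionGraph F).Adj (F x) x :=
        ⟨fun he => by rw [he] at hlt; exact lt_irrefl _ hlt, .inr rfl⟩
      exact (ih _ (hn ▸ hlt) _ rfl).trans hadj.reachable

/-- The map `F` on each of `m` copies of its domain. -/
def copies (m : ℕ) (F : τ → τ) : Fin m × τ → Fin m × τ := fun x => (x.1, F x.2)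

theorem functionGraph_copies_adj {m : ℕ} {F : τ → τ} {x y : Fin m × τ} :
    (functionGraph (copies m F)).Adj x y ↔ x.1 = y.1 ∧ (functionGraph F).Adj x.2 y.2 := by
  obtain ⟨i, a⟩ := x
  obtain ⟨j, b⟩ := y
  simp only [functionGraph, copies, Prod.mk.injEq, ne_eq]
  grind

end FunctionGraphs

/-- A graph property inherited by (finite) subgraphs. -/
def IsMonotone (P : {V : Type} → SimpleGraph V → Prop) : Prop :=
  ∀ {V W : Type} [Finite V] [Finite W] {G : SimpleGraph V} {H : SimpleGraph W}, H ⊑ G → P G → P H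

/-- A monotone graph property that can be tested on connected subgraphs of bounded size, and for
which disjoint copies of a fixed tree `τ` on `r` vertices are good but edge-maximal. Conversely two
tree components of the same size below `r` can always be joined by an edge. -/
structure Gadget (r : ℕ) where
  Good : {V : Type} → SimpleGraph V → Prop
  mono : IsMonotone Good
  size : ℕ
  good_of_local : ∀ {V : Type} [Finite V] {G : SimpleGraph V},
    (∀ S : Set V, S.ncard ≤ size → (G.induce S).Connected → Good (G.induce S)) → Good G
  τ : Type
  finite_τ : Finite τ
  card_τ : Nat.card τ = r
  par : τ → τ
  root : τ
  par_root : par root = root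
  rank : τ → ℕ
  rank_lt : ∀ a, a ≠ root → rank (par a) < rank a
  good_copies : ∀ m, Good (functionGraph (copies m par))
  not_good_copies_sup_edge : ∀ m x y, x ≠ y → ¬ (functionGraph (copies m par)).Adj x y →
    ¬ Good (functionGraph (copies m par) ⊔ edge x y)
  exists_good_sup_edge : ∀ {V : Type} [Finite V] {G : SimpleGraph V}, Good G →
    ∀ D₁ D₂ : Set V, Disjoint D₁ D₂ → IsComponent G D₁ → IsComponent G D₂ →
    IsForestOn G D₁ → IsForestOn G D₂ → D₁.ncard = D₂.ncard → D₁.ncard < r →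
    ∃ v ∈ D₁, ∃ u ∈ D₂, Good (G ⊔ edge v u)

attribute [instance] Gadget.finite_τ

/-- Every component with a number of vertices other than `r` can be joined to every tree
component without losing the property `P`. -/
def JoinsTrees (r : ℕ) (P : {V : Type} → SimpleGraph V → Prop) : Prop :=
  ∀ {V : Type} [Finite V] {G : SimpleGraph V}, P G → ∀ D₁ D₂ : Set V,
    Disjoint D₁ D₂ → IsComponent G D₁ → IsComponent G D₂ → IsForestOn G D₂ → D₁.ncard ≠ r →
    ∃ v ∈ D₁, ∃ u ∈ D₂, P (G ⊔ edge v u)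

section TameGraphs

variable {τ V W : Type*} {T : SimpleGraph τ} {d : ℕ} {G : SimpleGraph V}

/-- No path on four vertices has only vertices of degree at least `d`; nor does a triangle, since
the ends of the path may coincide. -/
def NoHeavyPath (d : ℕ) (G : SimpleGraph V) : Prop :=
  ∀ w x y z, G.Adj w x → G.Adj x y → G.Adj y z → w ≠ y → x ≠ z →
    d ≤ deg G w → d ≤ deg G x → d ≤ deg G y → ¬ d ≤ deg G z

theorem NoHeavyPath.mono {d' : ℕ} (h : NoHeavyPath d G) (hd : d ≤ d') : NoHeavyPath d' G :=
  fun w x y z hwx hxy hyz hwy hxz hw hx hy hz =>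
    h w x y z hwx hxy hyz hwy hxz (hd.trans hw) (hd.trans hx) (hd.trans hy) (hd.trans hz)

/-- In a `T`-tame graph the copies of the tree `T` are induced, essentially isolated subgraphs. The
conditions on short cycles and on paths of four vertices of degree at least `d` leave enough room
to attach a leaf elsewhere. -/
structure IsTame (T : SimpleGraph τ) (d : ℕ) (G : SimpleGraph V) : Prop where
  not_isCycleMap : ∀ s, 3 ≤ s → s ≤ 4 → ∀ f : ZMod s → V, ¬ IsCycleMap G f
  adj_of_adj : ∀ (f : T.Copy G) a b, G.Adj (f a) (f b) → T.Adj a b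
  deg_le : ∀ (f : T.Copy G) a, deg G (f a) ≤ max 2 (deg T a)
  range_eq : ∀ (f g : T.Copy G) a b, f a = g b ∨ G.Adj (f a) (g b) → Set.range f = Set.range g
  noHeavyPath : NoHeavyPath d G

theorem IsTame.of_copy [Finite V] {H : SimpleGraph W} (h : IsTame T d G) (φ : H.Copy G) :
    IsTame T d H where
  not_isCycleMap s hs hs' f hf := h.not_isCycleMap s hs hs' _ (hf.map φ)
  adj_of_adj f a b hab := h.adj_of_adj (φ.comp f) a b (φ.toHom.map_adj hab)
  deg_le f a := (deg_le_deg_apply φ _).trans (h.deg_le (φ.comp f) a)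
  range_eq f g a b hab := by
    have := h.range_eq (φ.comp f) (φ.comp g) a b (hab.imp (congrArg φ) φ.toHom.map_adj)
    rw [Copy.coe_comp, Copy.coe_comp, Set.range_comp, Set.range_comp] at this
    exact φ.injective.image_injective this
  noHeavyPath w x y z hwx hxy hyz hwy hxz hw hx hy hz :=
    h.noHeavyPath (φ w) (φ x) (φ y) (φ z) (φ.toHom.map_adj hwx) (φ.toHom.map_adj hxy)
      (φ.toHom.map_adj hyz) (φ.injective.ne hwy) (φ.injective.ne hxz)
      (hw.trans (deg_le_deg_apply φ _)) (hx.trans (deg_le_deg_apply φ _))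
      (hy.trans (deg_le_deg_apply φ _)) (hz.trans (deg_le_deg_apply φ _))

theorem deg_le_card [Finite V] (G : SimpleGraph V) (x : V) : deg G x ≤ Nat.card V := by
  rw [← Set.ncard_univ]
  exact Set.ncard_le_ncard (Set.subset_univ _)

theorem ncard_range_copy (f : T.Copy G) : (Set.range f).ncard = Nat.card τ :=
  Nat.card_range_of_injective f.injective

theorem ncard_pair_union_pair_le (w x y z : V) : ({w, x} ∪ {y, z} : Set V).ncard ≤ 4 := by
  have pair_le (a b : V) : ({a, b} : Set V).ncard ≤ 2 :=
    (Set.ncard_insert_le a {b}).trans (by rw [Set.ncard_singleton])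
  exact (Set.ncard_union_le _ _).trans (add_le_add (pair_le w x) (pair_le y z))

/-- Vertex bound for the connected subgraphs on which `T`-tameness is tested: the union of two
copies of `T`, or a path on four vertices, with sufficiently many neighbours. -/
noncomputable def tameSize (τ : Type*) (d : ℕ) : ℕ := (2 * Nat.card τ + 4) * (Nat.card τ + d + 4)

section Local

variable [Finite V] (h : ∀ S : Set V, S.ncard ≤ tameSize τ d → (G.induce S).Connected →
  IsTame T d (G.induce S))
include h

theorem exists_superset_isTame {A : Set V} (hA : (G.induce A).Connected)
    (hc : A.ncard ≤ 2 * Nat.card τ + 4) :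
    ∃ S, A ⊆ S ∧ IsTame T d (G.induce S) ∧
      ∀ x : S, x.1 ∈ A → min (Nat.card τ + d + 3) (deg G x) ≤ deg (G.induce S) x := by
  obtain ⟨S, hAS, hS, hcS, hdeg⟩ := exists_connected_superset G hA (Nat.card τ + d + 3)
  exact ⟨S, hAS, h S (hcS.trans (Nat.mul_le_mul_right _ hc)) hS, hdeg⟩

theorem range_eq_of_local (hT : T.Connected) {f g : T.Copy G} {a b : τ}
    (hab : f a = g b ∨ G.Adj (f a) (g b)) : Set.range f = Set.range g := by
  have hf := (connected_induce_range hT f.toHom).preconnected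
  have hg := (connected_induce_range hT g.toHom).preconnected
  have hconn : (G.induce (Set.range f ∪ Set.range g)).Connected := by
    rcases hab with hab | hab
    · exact induce_union_connected hf hg ⟨f a, ⟨a, rfl⟩, b, hab.symm⟩
    · exact connected_induce_union hf hg ⟨a, rfl⟩ ⟨b, rfl⟩ hab
  have hcard := Set.ncard_union_le (Set.range f) (Set.range g)
  rw [ncard_range_copy, ncard_range_copy] at hcard
  obtain ⟨S, hS, hgood, -⟩ := exists_superset_isTame h hconn (by omega)
  have himage := congrArg (Subtype.val '' ·) <| hgood.range_eq
    (copyToInduce f (Set.subset_union_left.trans hS))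
    (copyToInduce g (Set.subset_union_right.trans hS)) a b (hab.imp_left Subtype.ext)
  simp only [← Set.range_comp] at himage
  exact himage

theorem noHeavyPath_of_local : NoHeavyPath d G := by
  intro w x y z hwx hxy hyz hwy hxz hw hx hy hz
  obtain ⟨S, hS, hgood, hdeg⟩ := exists_superset_isTame h (connected_induce_union
    (induce_pair_connected_of_adj hwx).preconnected
    (induce_pair_connected_of_adj hyz).preconnected (.inr rfl) (.inl rfl) hxy)
    ((ncard_pair_union_pair_le w x y z).trans (by omega))
  have heavy (v : V) (hv : v ∈ ({w, x} ∪ {y, z} : Set V)) (hd : d ≤ deg G v) :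
      d ≤ deg (G.induce S) ⟨v, hS hv⟩ := (le_min (by omega) hd).trans (hdeg ⟨v, hS hv⟩ hv)
  exact hgood.noHeavyPath ⟨w, _⟩ ⟨x, _⟩ ⟨y, _⟩ ⟨z, _⟩ hwx hxy hyz
    (fun he => hwy (congrArg Subtype.val he)) (fun he => hxz (congrArg Subtype.val he))
    (heavy w (by simp) hw) (heavy x (by simp) hx) (heavy y (by simp) hy) (heavy z (by simp) hz)

theorem IsTame.of_local [Finite τ] (hT : T.Connected) : IsTame T d G := by
  have hrange (f : T.Copy G) : (G.induce (Set.range f)).Connected :=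
    connected_induce_range hT f.toHom
  refine ⟨fun s hs hs' f hf => ?_, fun f a b hab => ?_, fun f a => ?_,
    fun f g a b hab => range_eq_of_local h hT hab, noHeavyPath_of_local h⟩
  · have : NeZero s := ⟨by omega⟩
    obtain ⟨S, hS, hgood, -⟩ := exists_superset_isTame h hf.connected_induce_range
      (by rw [ncard_range_zmod hf.1]; omega)
    exact hgood.not_isCycleMap s hs hs' _ (hf.induce fun k => hS ⟨k, rfl⟩)
  · obtain ⟨S, hS, hgood, -⟩ := exists_superset_isTame h (hrange f)
      (by rw [ncard_range_copy]; omega)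
    exact hgood.adj_of_adj (copyToInduce f hS) a b hab
  · obtain ⟨S, hS, hgood, hdeg⟩ := exists_superset_isTame h (hrange f)
      (by rw [ncard_range_copy]; omega)
    have h1 : deg (G.induce S) ⟨f a, hS ⟨a, rfl⟩⟩ ≤ _ := hgood.deg_le (copyToInduce f hS) a
    have h2 : min _ (deg G (f a)) ≤ _ := hdeg ⟨f a, hS ⟨a, rfl⟩⟩ ⟨a, rfl⟩
    have h3 := deg_le_card T a
    omega

end Local

end TameGraphs

section TameCopies

variable {τ : Type*} {T : SimpleGraph τ} {F : τ → τ} {d m : ℕ}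

theorem exists_iso_eq_copy [Finite τ] (σ : T.Copy T) : ∃ e : T ≃g T, ∀ a, e a = σ a := by
  have hvert := Finite.injective_iff_bijective.1 σ.injective
  have hedge : Function.Surjective σ.toHom.mapEdgeSet :=
    Finite.injective_iff_surjective.1 (Hom.mapEdgeSet.injective _ σ.injective)
  refine ⟨⟨Equiv.ofBijective σ hvert, fun {a b} => ⟨fun hab => ?_, σ.toHom.map_adj⟩⟩, fun _ => rfl⟩
  obtain ⟨⟨e, he⟩, hmap⟩ := hedge ⟨s(σ a, σ b), hab⟩
  have : e = s(a, b) := Sym2.map.injective σ.injective (congrArg Subtype.val hmap)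
  exact (mem_edgeSet T).1 (this ▸ he)

/-- The `i`-th of the `m` disjoint copies of `functionGraph F`. -/
def fibreCopy (F : τ → τ) (i : Fin m) :
    (functionGraph F).Copy (functionGraph (copies m F)) :=
  ⟨⟨fun a => (i, a), fun h => functionGraph_copies_adj.2 ⟨rfl, h⟩⟩, Prod.mk_right_injective i⟩

theorem exists_eq_fibre [Finite τ] (hT : (functionGraph F).Connected)
    (f : (functionGraph F).Copy (functionGraph (copies m F))) :
    ∃ i, ∃ e : functionGraph F ≃g functionGraph F, ∀ a, f a = (i, e a) := by
  have fst_eq (a b : τ) : (f a).1 = (f b).1 := by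
    obtain ⟨p⟩ := hT.preconnected a b
    induction p with
    | nil => rfl
    | cons h _ ih => exact (functionGraph_copies_adj.1 (f.toHom.map_adj h)).1.trans ih
  obtain ⟨a₀⟩ := hT.nonempty
  have snd_inj : Function.Injective fun a => (f a).2 :=
    fun a b h => f.injective (Prod.ext (fst_eq a b) h)
  obtain ⟨e, he⟩ := exists_iso_eq_copy (T := functionGraph F)
    ⟨⟨fun a => (f a).2, fun h => (functionGraph_copies_adj.1 (f.toHom.map_adj h)).2⟩, snd_inj⟩
  exact ⟨(f a₀).1, e, fun a => Prod.ext (fst_eq a a₀) (he a).symm⟩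

theorem deg_functionGraph_copies (x : Fin m × τ) :
    deg (functionGraph (copies m F)) x = deg (functionGraph F) x.2 := by
  have : (functionGraph (copies m F)).neighborSet x =
      Prod.mk x.1 '' (functionGraph F).neighborSet x.2 := by
    ext ⟨j, b⟩
    simp only [mem_neighborSet, functionGraph_copies_adj, Set.mem_image, Prod.mk.injEq]
    grind
  rw [deg, this, Set.ncard_image_of_injective _ (Prod.mk_right_injective x.1), deg]

theorem isTame_copies [Finite τ] (hT : (functionGraph F).Connected) {root : τ}
    (hroot : F root = root) (rank : τ → ℕ) (hrank : ∀ a, a ≠ root → rank (F a) < rank a)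
    (hpath : NoHeavyPath d (functionGraph F)) :
    IsTame (functionGraph F) d (functionGraph (copies m F)) where
  not_isCycleMap s hs _ f hf := hf.not_isForestOn hs <|
    isForestOn_functionGraph (fun x => rank x.2) fun x _ hx =>
      hrank x.2 fun he => hx (Prod.ext rfl (by rw [copies, he, hroot]))
  adj_of_adj f a b hab := by
    obtain ⟨i, e, he⟩ := exists_eq_fibre hT f
    rw [he, he] at hab
    exact e.map_adj_iff.1 (functionGraph_copies_adj.1 hab).2
  deg_le f a := by
    obtain ⟨i, e, he⟩ := exists_eq_fibre hT f
    have := deg_le_deg_apply e.symm.toCopy (e a)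
    rw [he, deg_functionGraph_copies]
    exact le_max_of_le_right (this.trans_eq (congrArg _ (e.symm_apply_apply a)))
  range_eq f g a b hab := by
    obtain ⟨i, e, he⟩ := exists_eq_fibre hT f
    obtain ⟨j, e', he'⟩ := exists_eq_fibre hT g
    rw [he, he', functionGraph_copies_adj, Prod.mk.injEq] at hab
    obtain rfl : i = j := hab.elim And.left And.left
    rw [funext he, funext he', ← Function.comp_def, ← Function.comp_def, Set.range_comp,
      Set.range_comp, e.surjective.range_eq, e'.surjective.range_eq]
  noHeavyPath w x y z hwx hxy hyz hwy hxz hw hx hy hz := by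
    rw [deg_functionGraph_copies] at hw hx hy hz
    rw [functionGraph_copies_adj] at hwx hxy hyz
    exact hpath _ _ _ _ hwx.2 hxy.2 hyz.2 (fun he => hwy (Prod.ext (hwx.1.trans hxy.1) he))
      (fun he => hxz (Prod.ext (hxy.1.trans hyz.1) he)) hw hx hy hz

theorem not_isTame_copies_sup_edge {x y : Fin m × τ} (hxy : x ≠ y)
    (hadj : ¬ (functionGraph (copies m F)).Adj x y) :
    ¬ IsTame (functionGraph F) d (functionGraph (copies m F) ⊔ edge x y) := by
  intro h
  let copy (i : Fin m) := (Copy.ofLE _ (functionGraph (copies m F) ⊔ edge x y) le_sup_left).comp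
    (fibreCopy F i)
  have hnew : (functionGraph (copies m F) ⊔ edge x y).Adj x y :=
    sup_edge_adj.2 (.inr ⟨hxy, .inl ⟨rfl, rfl⟩⟩)
  by_cases hi : x.1 = y.1
  · have hy : copy x.1 y.2 = y := Prod.ext hi rfl
    exact hadj (functionGraph_copies_adj.2
      ⟨hi, h.adj_of_adj (copy x.1) x.2 y.2 (hy.symm ▸ hnew)⟩)
  · have hrange := h.range_eq (copy x.1) (copy y.1) x.2 y.2 (.inr hnew)
    obtain ⟨b, hb⟩ := hrange.subset ⟨x.2, rfl⟩
    exact hi (congrArg Prod.fst hb).symm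

end TameCopies

section Joins

variable {V τ : Type*} {G : SimpleGraph V} {T : SimpleGraph τ} {d : ℕ}

/-- A leaf or isolated vertex `u` whose neighbour, if any, has at most one neighbour that is not a
leaf. -/
structure IsPendant (G : SimpleGraph V) (u : V) : Prop where
  deg_le_one : deg G u ≤ 1
  eq_of_adj : ∀ q y z, G.Adj u q → G.Adj q y → G.Adj q z → 2 ≤ deg G y → 2 ≤ deg G z → y = z

/-- Remove all leaves of the forest: a leaf or an isolated vertex of the rest has a neighbour among
the removed leaves. -/
theorem IsForestOn.exists_isPendant [Finite V] {D : Set V} (h : IsForestOn G D) (hne : D.Nonempty)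
    (hD : AdjClosed G D) : ∃ u ∈ D, IsPendant G u := by
  rcases Set.eq_empty_or_nonempty {x ∈ D | 2 ≤ deg G x} with hZ | hZ
  · have small : ∀ x ∈ D, deg G x < 2 := fun x hx => not_le.1 fun hx2 => hZ.subset ⟨hx, hx2⟩
    obtain ⟨u, hu⟩ := hne
    exact ⟨u, hu, Nat.le_of_lt_succ (small u hu), fun q y _ huq hqy _ hy _ =>
      absurd hy (not_le.2 (small y (hD q (hD u hu q huq) y hqy)))⟩
  · obtain ⟨x, ⟨hxD, hx2⟩, hx⟩ := h _ (Set.sep_subset _ _) hZ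
    have heq (y z : V) (hy : G.Adj x y) (hz : G.Adj x z) (hy2 : 2 ≤ deg G y) (hz2 : 2 ≤ deg G z) :
        y = z := hx y ⟨hD x hxD y hy, hy2⟩ z ⟨hD x hxD z hz, hz2⟩ hy hz
    obtain ⟨u, hxu, hu⟩ : ∃ u, G.Adj x u ∧ deg G u ≤ 1 := by
      by_contra! hall
      obtain ⟨y, z, hy, hz, hyz⟩ := (Set.one_lt_ncard_iff).1 hx2
      exact hyz (heq y z hy hz (hall y hy) (hall z hz))
    refine ⟨u, hD x hxD u hxu, hu, fun q y z huq hqy hqz hy hz => ?_⟩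
    obtain rfl : q = x := (Set.ncard_le_one_iff (Set.toFinite _)).1 hu huq hxu.symm
    exact heq y z hqy hqz hy hz

/-- The vertices that lie in some copy of `T`. -/
def covered (T : SimpleGraph τ) (G : SimpleGraph V) : Set V := {v | ∃ f : T.Copy G, v ∈ Set.range f}

theorem exists_notMem_covered (h : IsTame T d G) (hT : T.Connected) {D : Set V}
    (hD : IsComponent G D) (hcard : D.ncard ≠ Nat.card τ) : ∃ v ∈ D, v ∉ covered T G := by
  by_contra! hall
  obtain ⟨v, hv⟩ := hD.nonempty
  obtain ⟨f, a, rfl⟩ := hall v hv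
  have hsub : Set.range f ⊆ D := Set.range_subset_iff.2 fun b =>
    hD.closed.mem_of_reachable hv ((hT.preconnected a b).map f.toHom)
  refine hcard ((congrArg Set.ncard (hD.minimal _ hsub ⟨f a, a, rfl⟩ ?_)).symm.trans
    (ncard_range_copy f))
  rintro _ ⟨b, rfl⟩ y hy
  obtain ⟨g, c, rfl⟩ := hall y (hD.closed _ (hsub ⟨b, rfl⟩) y hy)
  exact (h.range_eq f g b c (.inr hy)).symm.subset ⟨c, rfl⟩

theorem mem_covered_of_adj [Finite V] (h : IsTame T d G) {x y : V} (hx : x ∈ covered T G)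
    (hdeg : 3 ≤ deg G x) (hadj : G.Adj x y) : y ∈ covered T G := by
  obtain ⟨f, a, rfl⟩ := hx
  have himage : f '' T.neighborSet a = G.neighborSet (f a) := by
    refine Set.eq_of_subset_of_ncard_le ?_ ?_ (Set.toFinite _)
    · rintro _ ⟨b, hb, rfl⟩
      exact f.toHom.map_adj hb
    · have : deg G (f a) ≤ max 2 (deg T a) := h.deg_le f a
      calc deg G (f a) ≤ deg T a := by omega
        _ = _ := (Set.ncard_image_of_injective _ f.injective).symm
  obtain ⟨b, -, rfl⟩ := himage.symm.subset hadj
  exact ⟨f, b, rfl⟩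

section NewCopy

variable {u v : V} {f : T.Copy (G ⊔ edge v u)} {a b : τ} (ha : f a = v) (hb : f b = u)
include ha hb

theorem adj_of_copy_sup_edge {x y : τ} (hxy : T.Adj x y) (hne : s(x, y) ≠ s(a, b)) :
    G.Adj (f x) (f y) := by
  rcases sup_edge_adj.1 (f.toHom.map_adj hxy) with h | ⟨-, ⟨hx, hy⟩ | ⟨hx, hy⟩⟩
  · exact h
  · exact absurd (by rw [f.injective (hx.trans ha.symm), f.injective (hy.trans hb.symm)]) hne
  · exact absurd (by rw [f.injective (hx.trans hb.symm), f.injective (hy.trans ha.symm),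
      Sym2.eq_swap]) hne

theorem deg_le_of_copy_sup_edge [Finite V] {x : τ} (hxa : x ≠ a) (hxb : x ≠ b) :
    deg T x ≤ deg G (f x) :=
  (deg_le_deg_apply f x).trans_eq
    (deg_sup_edge_of_ne (fun h => hxa (f.injective (h.trans ha.symm)))
      fun h => hxb (f.injective (h.trans hb.symm)))

end NewCopy

theorem IsTame.noHeavyPath_sup_edge [Finite V] (h : IsTame T d G) (hd : 3 ≤ d) {u v : V}
    (hu : deg G u ≤ 1) (hv : d ≤ deg G v ∨ ∀ y, G.Adj v y → ¬ d ≤ deg G y) :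
    NoHeavyPath d (G ⊔ edge v u) := by
  intro w x y z hwx hxy hyz hwy hxz hw hx hy hz
  have ne_u {t : V} (ht : d ≤ deg (G ⊔ edge v u) t) : t ≠ u := by
    rintro rfl
    have := deg_sup_edge_right_le G v t
    omega
  have adj_G {s t : V} (hs : d ≤ deg (G ⊔ edge v u) s) (ht : d ≤ deg (G ⊔ edge v u) t)
      (hst : (G ⊔ edge v u).Adj s t) : G.Adj s t :=
    (sup_edge_adj.1 hst).resolve_right fun h =>
      h.2.elim (fun h => ne_u ht h.2) fun h => ne_u hs h.1
  have heavy {s t : V} (hs : d ≤ deg (G ⊔ edge v u) s) (ht : d ≤ deg (G ⊔ edge v u) t)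
      (hst : G.Adj s t) : d ≤ deg G s := by
    rcases eq_or_ne s v with rfl | hsv
    · rw [deg_sup_edge_of_ne hst.ne' (ne_u ht)] at ht
      exact hv.resolve_right fun h => h t hst ht
    · rwa [deg_sup_edge_of_ne hsv (ne_u hs)] at hs
  have hwx' := adj_G hw hx hwx
  have hxy' := adj_G hx hy hxy
  have hyz' := adj_G hy hz hyz
  exact h.noHeavyPath w x y z hwx' hxy' hyz' hwy hxz (heavy hw hx hwx') (heavy hx hy hxy')
    (heavy hy hz hyz') (heavy hz hy hyz'.symm)

theorem IsTame.sup_edge [Finite V] (h : IsTame T d G) (hd : 3 ≤ d) {D : Set V} (hD : AdjClosed G D)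
    {u v : V} (huD : u ∈ D) (hvD : v ∉ D) (hu : deg G u ≤ 1) (hvc : v ∉ covered T G)
    (hv : d ≤ deg G v ∨ ∀ y, G.Adj v y → ¬ d ≤ deg G y)
    (hcopy : ∀ (f : T.Copy (G ⊔ edge v u)) a b, f a = v → f b = u → ¬ T.Adj a b) :
    IsTame T d (G ⊔ edge v u) := by
  have exists_copy (f : T.Copy (G ⊔ edge v u)) : ∃ g : T.Copy G, ∀ a, g a = f a := by
    refine ⟨⟨⟨f, fun {a b} hab => ?_⟩, f.injective⟩, fun _ => rfl⟩
    rcases sup_edge_adj.1 (f.toHom.map_adj hab) with h | ⟨-, ⟨ha, hb⟩ | ⟨ha, hb⟩⟩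
    · exact h
    · exact absurd hab (hcopy f a b ha hb)
    · exact absurd hab.symm (hcopy f b a hb ha)
  have adj_G (f g : T.Copy G) {a b : τ} (hab : (G ⊔ edge v u).Adj (f a) (g b)) :
      G.Adj (f a) (g b) := by
    rcases sup_edge_adj.1 hab with h | ⟨-, ⟨ha, -⟩ | ⟨-, hb⟩⟩
    · exact h
    · exact absurd ⟨f, a, ha⟩ hvc
    · exact absurd ⟨g, b, hb⟩ hvc
  refine ⟨fun s hs hs' f hf => h.not_isCycleMap s hs hs' f (hf.of_sup_edge hs hD hvD huD),
    fun f a b hab => ?_, fun f a => ?_, fun f f' a b hab => ?_,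
    h.noHeavyPath_sup_edge hd hu hv⟩
  · obtain ⟨g, hg⟩ := exists_copy f
    rw [← hg, ← hg] at hab
    exact h.adj_of_adj g a b (adj_G g g hab)
  · obtain ⟨g, hg⟩ := exists_copy f
    rw [← hg]
    rcases eq_or_ne (g a) u with hau | hau
    · have := deg_sup_edge_right_le G v u
      rw [hau]
      omega
    · rw [deg_sup_edge_of_ne (fun hav => hvc ⟨g, a, hav⟩) hau]
      exact h.deg_le g a
  · obtain ⟨g, hg⟩ := exists_copy f
    obtain ⟨g', hg'⟩ := exists_copy f'
    rw [← hg, ← hg'] at hab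
    rw [← funext hg, ← funext hg']
    exact h.range_eq g g' a b (hab.imp_right (adj_G g g'))

end Joins

section ShortCycles

variable {V τ : Type*} {G : SimpleGraph V} {T : SimpleGraph τ} {d : ℕ}

theorem exists_isCycleMap_of_triangle {x y z : V} (hxy : G.Adj x y) (hyz : G.Adj y z)
    (hzx : G.Adj z x) : ∃ f : ZMod 3 → V, IsCycleMap G f := by
  refine ⟨![x, y, z], fun i j hij => ?_, fun i => ?_⟩
  · fin_cases i <;> fin_cases j <;> first | rfl | simp_all [hxy.ne, hyz.ne, hzx.ne, eq_comm]
  · fin_cases i <;> assumption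

theorem IsTame.not_triangle (h : IsTame T d G) {x y z : V} (hxy : G.Adj x y) (hyz : G.Adj y z) :
    ¬ G.Adj z x := by
  intro hzx
  obtain ⟨f, hf⟩ := exists_isCycleMap_of_triangle hxy hyz hzx
  exact h.not_isCycleMap 3 le_rfl (by norm_num) f hf

theorem IsTame.not_square (h : IsTame T d G) {w x y z : V} (hwx : G.Adj w x) (hxy : G.Adj x y)
    (hyz : G.Adj y z) (hwy : w ≠ y) (hxz : x ≠ z) : ¬ G.Adj z w := by
  intro hzw
  refine h.not_isCycleMap 4 (by norm_num) le_rfl ![w, x, y, z] ⟨fun i j hij => ?_, fun i => ?_⟩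
  · have := hwx.ne
    have := hxy.ne
    have := hyz.ne
    have := hzw.ne
    fin_cases i <;> fin_cases j <;> first | rfl | simp_all [eq_comm]
  · fin_cases i <;> assumption

theorem exists_leaves [Finite V] {x : V} {e : ℕ} (hx : e + 1 ≤ deg G x) (y : V) :
    ∃ g : Fin e → V, Function.Injective g ∧ ∀ i, G.Adj x (g i) ∧ g i ≠ y := by
  have hcard : e ≤ (G.neighborSet x \ {y}).ncard :=
    (Nat.le_sub_one_of_lt hx).trans (Set.pred_ncard_le_ncard_sdiff_singleton _ y)
  obtain ⟨t, ht, hte⟩ := Set.exists_subset_card_eq hcard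
  let φ := (Finite.equivFinOfCardEq hte).symm
  exact ⟨fun i => φ i, Subtype.val_injective.comp φ.injective, fun i => ht (φ i).2⟩

/-- An injective map sending every vertex next to the image of its parent is a copy. -/
def copyOfParent {F : τ → τ} (f : τ → V) (hf : Function.Injective f)
    (h : ∀ a, F a ≠ a → G.Adj (f a) (f (F a))) : (functionGraph F).Copy G :=
  ⟨⟨f, by
    rintro a b ⟨hab, rfl | rfl⟩
    · exact h a hab.symm
    · exact (h b hab).symm⟩, hf⟩

end ShortCycles

section DoubleStar

variable {e : ℕ}

/-- Parent map of the double star: `(b, none)` are the two adjacent centres, and `(b, some i)` are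
the `e` leaves at the centre `b`. -/
def doubleStarParent : Bool × Option (Fin e) → Bool × Option (Fin e)
  | (_, none) => (false, none)
  | (b, some _) => (b, none)

/-- The tree consisting of two adjacent centres with `e` leaves each. -/
abbrev doubleStar (e : ℕ) : SimpleGraph (Bool × Option (Fin e)) := functionGraph doubleStarParent

/-- The distance to the centre `false`. -/
def doubleStarRank : Bool × Option (Fin e) → ℕ
  | (b, none) => b.toNat
  | (_, some _) => 2

theorem doubleStarRank_lt (a : Bool × Option (Fin e)) (ha : a ≠ (false, none)) :
    doubleStarRank (doubleStarParent a) < doubleStarRank a := by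
  rcases a with ⟨_ | _, _ | i⟩ <;> simp_all [doubleStarRank, doubleStarParent]

theorem doubleStar_connected : (doubleStar e).Connected :=
  connected_functionGraph doubleStarRank doubleStarRank_lt

theorem doubleStar_adj_centers (b : Bool) : (doubleStar e).Adj (b, none) (!b, none) := by
  cases b <;> simp [functionGraph, doubleStarParent]

theorem doubleStar_adj_leaf {b : Bool} {i : Fin e} {a : Bool × Option (Fin e)} :
    (doubleStar e).Adj (b, some i) a ↔ a = (b, none) := by
  rcases a with ⟨_ | _, _ | j⟩ <;> cases b <;> simp [functionGraph, doubleStarParent]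

theorem deg_doubleStar_leaf (b : Bool) (i : Fin e) : deg (doubleStar e) (b, some i) = 1 := by
  rw [deg, Set.ncard_eq_one]
  exact ⟨(b, none), Set.ext fun a => doubleStar_adj_leaf⟩

theorem le_deg_doubleStar_center (b : Bool) : e + 1 ≤ deg (doubleStar e) (b, none) := by
  let f (o : Option (Fin e)) : Bool × Option (Fin e) := o.elim (!b, none) fun i => (b, some i)
  have hf : Function.Injective f := by
    rintro (_ | i) (_ | j) <;> simp [f]
  have hadj : ∀ o, (doubleStar e).Adj (b, none) (f o)
    | none => doubleStar_adj_centers b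
    | some _ => (doubleStar_adj_leaf.2 rfl).symm
  simpa using card_le_deg hf hadj

theorem noHeavyPath_doubleStar : NoHeavyPath 2 (doubleStar e) := by
  have exists_eq_center (a : Bool × Option (Fin e)) (ha : 2 ≤ deg (doubleStar e) a) :
      ∃ b, a = (b, none) := by
    obtain ⟨b, _ | i⟩ := a
    · exact ⟨b, rfl⟩
    · rw [deg_doubleStar_leaf] at ha
      omega
  intro w x y z hwx hxy _ hwy _ hw hx hy _
  obtain ⟨b, rfl⟩ := exists_eq_center w hw
  obtain ⟨b', rfl⟩ := exists_eq_center x hx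
  obtain ⟨b'', rfl⟩ := exists_eq_center y hy
  have := hwx.ne
  have := hxy.ne
  cases b <;> cases b' <;> cases b'' <;> simp_all

variable {V τ : Type} [Finite V] {G : SimpleGraph V} {T : SimpleGraph τ} {d : ℕ}

theorem exists_copy_doubleStar (h : IsTame T d G) {x : Bool → V} (hadj : G.Adj (x false) (x true))
    (hx : ∀ b, e + 1 ≤ deg G (x b)) : ∃ f : (doubleStar e).Copy G, ∀ b, f (b, none) = x b := by
  have hadj' : ∀ b, G.Adj (x b) (x !b)
    | false => hadj
    | true => hadj.symm
  choose g hg hgx using fun b => exists_leaves (hx b) (x !b)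
  have leaf_ne (b c : Bool) (i : Fin e) : g b i ≠ x c := by
    rcases Bool.eq_or_eq_not c b with rfl | rfl
    · exact (hgx c i).1.ne'
    · exact (hgx b i).2
  have leaf_ne_leaf (b : Bool) (i j : Fin e) : g b i ≠ g (!b) j := fun hij =>
    h.not_triangle (hgx b i).1 (hij ▸ (hgx (!b) j).1.symm) (hadj' b).symm
  refine ⟨copyOfParent (fun p => p.2.elim (x p.1) (g p.1)) ?_ ?_, fun _ => rfl⟩
  · rintro ⟨b, _ | i⟩ ⟨c, _ | j⟩ hbc
    · cases b <;> cases c <;> first | rfl | exact absurd hbc (hadj' _).ne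
    · exact absurd hbc.symm (leaf_ne c b j)
    · exact absurd hbc (leaf_ne b c i)
    · rcases Bool.eq_or_eq_not c b with rfl | rfl
      · rw [hg c hbc]
      · exact absurd hbc (leaf_ne_leaf b i j)
  · rintro ⟨_ | _, _ | i⟩ hne
    · exact absurd rfl hne
    · exact (hgx false i).1.symm
    · exact hadj.symm
    · exact (hgx true i).1.symm

theorem exists_attachable_doubleStar (he : 2 ≤ e) (h : IsTame (doubleStar e) (e + 1) G) {D : Set V}
    (hD : IsComponent G D) (hcard : D.ncard ≠ Nat.card (Bool × Option (Fin e))) :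
    ∃ v ∈ D, v ∉ covered (doubleStar e) G ∧ ∀ y, G.Adj v y → ¬ e + 1 ≤ deg G y := by
  obtain ⟨v, hvD, hv⟩ := exists_notMem_covered h doubleStar_connected hD hcard
  by_cases hvy : ∃ y, G.Adj v y ∧ e + 1 ≤ deg G y
  · obtain ⟨y, hadj, hy⟩ := hvy
    have hyc : y ∉ covered (doubleStar e) G := fun hyc =>
      hv (mem_covered_of_adj h hyc (by omega) hadj.symm)
    refine ⟨y, hD.closed v hvD y hadj, hyc, fun z hyz hz => hyc ?_⟩
    obtain ⟨f, hf⟩ := exists_copy_doubleStar (x := fun b => cond b y z) h hyz.symm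
      (Bool.rec hz hy)
    exact ⟨f, _, hf true⟩
  · exact ⟨v, hvD, hv, fun y hadj hy => hvy ⟨y, hadj, hy⟩⟩

theorem exists_isTame_sup_edge_doubleStar (he : 2 ≤ e) (h : IsTame (doubleStar e) (e + 1) G)
    {D₁ D₂ : Set V} (hD : Disjoint D₁ D₂) (hD₁ : IsComponent G D₁) (hD₂ : IsComponent G D₂)
    (hforest : IsForestOn G D₂) (hcard : D₁.ncard ≠ Nat.card (Bool × Option (Fin e))) :
    ∃ v ∈ D₁, ∃ u ∈ D₂, IsTame (doubleStar e) (e + 1) (G ⊔ edge v u) := by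
  obtain ⟨v, hv, hvc, hlight⟩ := exists_attachable_doubleStar he h hD₁ hcard
  obtain ⟨u, hu, hpend⟩ := hforest.exists_isPendant hD₂.nonempty hD₂.closed
  refine ⟨v, hv, u, hu, h.sup_edge (by omega) hD₂.closed hu (hD.notMem_of_mem_left hv)
    hpend.deg_le_one hvc (.inr hlight) fun f a b ha hb hab => ?_⟩
  obtain ⟨c, _ | i⟩ := b
  · have h1 := le_deg_doubleStar_center (e := e) c
    have h2 : _ ≤ deg _ (f _) := deg_le_deg_apply f (c, none)
    have h3 := deg_sup_edge_right_le G v u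
    have h4 := hpend.deg_le_one
    rw [hb] at h2
    omega
  · obtain rfl := doubleStar_adj_leaf.1 hab.symm
    have hcc := doubleStar_adj_centers (e := e) c
    have hadj := adj_of_copy_sup_edge ha hb hcc (by simp)
    have hheavy := deg_le_of_copy_sup_edge ha hb (x := (!c, none)) (by simp) (by simp)
    rw [ha] at hadj
    exact hlight _ hadj ((le_deg_doubleStar_center _).trans hheavy)

end DoubleStar

section Spider

/-- Vertices of the spider: the `body` carries two feet with `e` toes each and a path
`body - mid - tip`. -/
inductive SpiderVertex (e : ℕ)
  | body
  | mid
  | tip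
  | foot (b : Bool)
  | toe (b : Bool) (i : Fin e)

variable {e : ℕ}

namespace SpiderVertex

/-- The three vertices of the path, and the two feet with their toes. -/
def equivSum : SpiderVertex e ≃ Fin 3 ⊕ Bool × Option (Fin e) where
  toFun
    | body => .inl 0
    | mid => .inl 1
    | tip => .inl 2
    | foot b => .inr (b, none)
    | toe b i => .inr (b, some i)
  invFun
    | .inl 0 => body
    | .inl 1 => mid
    | .inl 2 => tip
    | .inr (b, none) => foot b
    | .inr (b, some i) => toe b i
  left_inv := by rintro (_ | _ | _ | _ | _) <;> rfl
  right_inv := by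
    rintro (i | ⟨b, _ | i⟩)
    · fin_cases i <;> rfl
    · rfl
    · rfl

instance : Finite (SpiderVertex e) := .of_equiv _ equivSum.symm

theorem card_eq : Nat.card (SpiderVertex e) = 2 * e + 5 := by
  rw [Nat.card_congr equivSum]
  simp only [Nat.card_eq_fintype_card, Fintype.card_sum, Fintype.card_prod, Fintype.card_bool,
    Fintype.card_option, Fintype.card_fin]
  omega

/-- Parent map of the spider, rooted at its body. -/
def parent : SpiderVertex e → SpiderVertex e
  | body | mid | foot _ => body
  | tip => mid
  | toe b _ => foot b

/-- The distance to the body. -/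
def rank : SpiderVertex e → ℕ
  | body => 0
  | mid | foot _ => 1
  | tip | toe _ _ => 2

theorem rank_parent_lt (a : SpiderVertex e) (ha : a ≠ body) : rank (parent a) < rank a := by
  rcases a with _ | _ | _ | b | ⟨b, i⟩ <;> simp_all [rank, parent]

end SpiderVertex

open SpiderVertex

/-- The spider as a graph. -/
abbrev spider (e : ℕ) : SimpleGraph (SpiderVertex e) := functionGraph parent

theorem spider_connected : (spider e).Connected := connected_functionGraph rank rank_parent_lt

theorem spider_adj_body_iff {a : SpiderVertex e} :
    (spider e).Adj body a ↔ a = mid ∨ ∃ b, a = foot b := by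
  rcases a with _ | _ | _ | b | ⟨b, i⟩ <;> simp [functionGraph, parent]

theorem spider_adj_mid_iff {a : SpiderVertex e} : (spider e).Adj mid a ↔ a = body ∨ a = tip := by
  rcases a with _ | _ | _ | b | ⟨b, i⟩ <;> simp [functionGraph, parent]

theorem spider_adj_tip_iff {a : SpiderVertex e} : (spider e).Adj tip a ↔ a = mid := by
  rcases a with _ | _ | _ | b | ⟨b, i⟩ <;> simp [functionGraph, parent]

theorem spider_adj_foot_iff {b : Bool} {a : SpiderVertex e} :
    (spider e).Adj (foot b) a ↔ a = body ∨ ∃ i, a = toe b i := by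
  rcases a with _ | _ | _ | b | ⟨b, i⟩ <;> simp [functionGraph, parent, eq_comm]

theorem spider_adj_toe_iff {b : Bool} {i : Fin e} {a : SpiderVertex e} :
    (spider e).Adj (toe b i) a ↔ a = foot b := by
  rcases a with _ | _ | _ | b | ⟨b, i⟩ <;> simp [functionGraph, parent, eq_comm]

theorem three_le_deg_spider_body : 3 ≤ deg (spider e) body := by
  let f (o : Option Bool) : SpiderVertex e := o.elim mid foot
  have hf : Function.Injective f := by
    rintro (_ | i) (_ | j) <;> simp [f]
  have hadj : ∀ o, (spider e).Adj body (f o)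
    | none => spider_adj_body_iff.2 (.inl rfl)
    | some b => spider_adj_body_iff.2 (.inr ⟨b, rfl⟩)
  simpa using card_le_deg hf hadj

theorem le_deg_spider_foot (b : Bool) : e + 1 ≤ deg (spider e) (foot b) := by
  let f (o : Option (Fin e)) : SpiderVertex e := o.elim body (toe b)
  have hf : Function.Injective f := by
    rintro (_ | i) (_ | j) <;> simp [f]
  have hadj : ∀ o, (spider e).Adj (foot b) (f o)
    | none => spider_adj_foot_iff.2 (.inl rfl)
    | some i => spider_adj_foot_iff.2 (.inr ⟨i, rfl⟩)
  simpa using card_le_deg hf hadj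

theorem deg_spider_mid : deg (spider e) mid = 2 := by
  have : (spider e).neighborSet mid = {body, tip} := Set.ext fun a => spider_adj_mid_iff
  rw [deg, this, Set.ncard_pair (by simp)]

theorem deg_spider_tip : deg (spider e) tip = 1 := by
  rw [deg, Set.ncard_eq_one]
  exact ⟨mid, Set.ext fun a => spider_adj_tip_iff⟩

theorem deg_spider_toe (b : Bool) (i : Fin e) : deg (spider e) (toe b i) = 1 := by
  rw [deg, Set.ncard_eq_one]
  exact ⟨foot b, Set.ext fun a => spider_adj_toe_iff⟩

theorem eq_body_or_foot_of_deg {a : SpiderVertex e} (ha : 3 ≤ deg (spider e) a) :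
    a = body ∨ ∃ b, a = foot b := by
  rcases a with _ | _ | _ | b | ⟨b, i⟩
  · exact .inl rfl
  · rw [deg_spider_mid] at ha
    omega
  · rw [deg_spider_tip] at ha
    omega
  · exact .inr ⟨b, rfl⟩
  · rw [deg_spider_toe] at ha
    omega

theorem noHeavyPath_spider : NoHeavyPath 3 (spider e) := by
  intro w x y z hwx hxy hyz hwy hxz hw hx hy hz
  have body_or_body {a b : SpiderVertex e} (hab : (spider e).Adj a b) (ha : 3 ≤ deg (spider e) a)
      (hb : 3 ≤ deg (spider e) b) : a = body ∨ b = body := by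
    rcases eq_body_or_foot_of_deg ha with ha | ⟨i, rfl⟩
    · exact .inl ha
    · rcases spider_adj_foot_iff.1 hab with hb | ⟨j, rfl⟩
      · exact .inr hb
      · rw [deg_spider_toe] at hb
        omega
  have := body_or_body hwx hw hx
  have := body_or_body hxy hx hy
  have := body_or_body hyz hy hz
  have := hxy.ne
  grind

variable {V τ : Type} [Finite V] {G : SimpleGraph V} {T : SimpleGraph τ} {d : ℕ}

/-- Placement of the spider's vertices. -/
def spiderMap (c w t : V) (x : Bool → V) (g : Bool → Fin e → V) : SpiderVertex e → V
  | body => c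
  | mid => w
  | tip => t
  | foot b => x b
  | toe b i => g b i

omit [Finite V] in
theorem spiderMap_injective (h : IsTame T d G) {c w t : V} {x : Bool → V} {g : Bool → Fin e → V}
    (hx : ∀ b, G.Adj c (x b)) (hxx : x false ≠ x true) (hw : G.Adj c w) (hxw : ∀ b, x b ≠ w)
    (ht : G.Adj w t) (htc : t ≠ c) (hg : ∀ b, Function.Injective (g b))
    (hgx : ∀ b i, G.Adj (x b) (g b i) ∧ g b i ≠ c) : Function.Injective (spiderMap c w t x g) := by
  have x_inj : Function.Injective x := by
    rintro (_ | _) (_ | _) hbb <;> first | rfl | exact absurd hbb hxx | exact absurd hbb hxx.symm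
  have x_ne_t (b : Bool) : x b ≠ t := fun hxt => h.not_triangle (hx b) (hxt ▸ ht.symm) hw.symm
  have x_ne_g (b b' : Bool) (i : Fin e) : x b ≠ g b' i := fun hxg =>
    h.not_triangle (hx b) (hxg ▸ (hgx b' i).1.symm) (hx b').symm
  have w_ne_g (b : Bool) (i : Fin e) : w ≠ g b i := fun hwg =>
    h.not_triangle hw (hwg ▸ (hgx b i).1.symm) (hx b).symm
  have t_ne_g (b : Bool) (i : Fin e) : t ≠ g b i := fun htg =>
    h.not_square hw ht (htg ▸ (hgx b i).1.symm) htc.symm (hxw b).symm (hx b).symm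
  have g_inj (b b' : Bool) (i j : Fin e) (hgg : g b i = g b' j) : b = b' := by
    by_contra hbb
    exact h.not_square (hx b) (hgx b i).1 (hgg ▸ (hgx b' j).1.symm) (hgx b i).2.symm
      (x_inj.ne hbb) (hx b').symm
  have hc (b : Bool) := (hx b).ne
  have hcw := hw.ne
  have hwt := ht.ne
  rintro (_ | _ | _ | b | ⟨b, i⟩) (_ | _ | _ | b' | ⟨b', j⟩) hab <;>
    simp only [spiderMap] at hab <;> grind [Function.Injective]

theorem exists_copy_spider (h : IsTame T d G) {c w : V} {x : Bool → V} (hx : ∀ b, G.Adj c (x b))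
    (hxx : x false ≠ x true) (hheavy : ∀ b, e + 1 ≤ deg G (x b)) (hw : G.Adj c w)
    (hxw : ∀ b, x b ≠ w) (hw2 : 2 ≤ deg G w) :
    ∃ f : (spider e).Copy G, f mid = w ∧ ∀ b, f (foot b) = x b := by
  choose g hg hgx using fun b => exists_leaves (hheavy b) c
  obtain ⟨t, -, ht⟩ := exists_leaves (e := 1) hw2 c
  refine ⟨copyOfParent (spiderMap c w (t 0) x g)
    (spiderMap_injective h hx hxx hw hxw (ht 0).1 (ht 0).2 hg hgx) ?_, rfl, fun _ => rfl⟩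
  rintro (_ | _ | _ | b | ⟨b, i⟩) hne
  · exact absurd rfl hne
  · exact hw.symm
  · exact (ht 0).1.symm
  · exact (hx b).symm
  · exact (hgx b i).1.symm

/-- The vertices to which a leaf can be attached without creating a copy of the spider. -/
def IsAttachable (e : ℕ) (G : SimpleGraph V) (v : V) : Prop :=
  v ∉ covered (spider e) G ∧
    ((e + 1 ≤ deg G v ∧
        ∀ y z, G.Adj v y → G.Adj v z → e + 1 ≤ deg G y → e + 1 ≤ deg G z → y = z) ∨
      ∀ y, G.Adj v y → ¬ e + 1 ≤ deg G y ∧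
        (3 ≤ deg G y → ∀ z, G.Adj y z → ¬ e + 1 ≤ deg G z))

theorem exists_isAttachable (he : 2 ≤ e) (h : IsTame (spider e) (e + 1) G) {D : Set V}
    (hD : IsComponent G D) (hcard : D.ncard ≠ Nat.card (SpiderVertex e)) :
    ∃ v ∈ D, IsAttachable e G v := by
  by_cases hx : ∃ x ∈ D, e + 1 ≤ deg G x ∧ x ∉ covered (spider e) G
  · obtain ⟨x, hxD, hxh, hxc⟩ := hx
    by_cases hyz : ∀ y z, G.Adj x y → G.Adj x z → e + 1 ≤ deg G y → e + 1 ≤ deg G z → y = z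
    · exact ⟨x, hxD, hxc, .inl ⟨hxh, hyz⟩⟩
    push Not at hyz
    obtain ⟨y, y', hy, hy', hyh, hyh', hyy⟩ := hyz
    have not_heavy (z : V) (hyz : G.Adj y z) (hzx : z ≠ x) : ¬ e + 1 ≤ deg G z := fun hzh =>
      h.noHeavyPath z y x y' hyz.symm hy.symm hy' hzx hyy hzh hyh hxh hyh'
    refine ⟨y, hD.closed x hxD y hy, fun hyc => hxc (mem_covered_of_adj h hyc (by omega) hy.symm),
      .inl ⟨hyh, fun z z' hz hz' hzh hzh' => ?_⟩⟩
    rw [not_not.1 fun hzx => not_heavy z hz hzx hzh, not_not.1 fun hzx => not_heavy z' hz' hzx hzh']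
  · push Not at hx
    obtain ⟨v, hvD, hv⟩ := exists_notMem_covered h spider_connected hD hcard
    refine ⟨v, hvD, hv, .inr fun y hvy => ⟨fun hyh => hv ?_, fun hy3 z hyz hzh => hv ?_⟩⟩
    all_goals have hyD := hD.closed v hvD y hvy
    · exact mem_covered_of_adj h (hx y hyD hyh) (by omega) hvy.symm
    · have hzc := hx z (hD.closed y hyD z hyz) hzh
      have hyc := mem_covered_of_adj h hzc (by omega) hyz.symm
      exact mem_covered_of_adj h hyc hy3 hvy.symm

section NewCopy

variable {u v : V} {f : (spider e).Copy (G ⊔ edge v u)}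

theorem IsAttachable.not_body_mid (hv : IsAttachable e G v) (ha : f body = v) : f mid ≠ u := by
  intro hb
  have hadj (b : Bool) : G.Adj (f body) (f (foot b)) :=
    adj_of_copy_sup_edge ha hb (spider_adj_body_iff.2 (.inr ⟨b, rfl⟩)) (by simp)
  simp only [ha] at hadj
  have hheavy (b : Bool) : e + 1 ≤ deg G (f (foot b)) :=
    (le_deg_spider_foot b).trans (deg_le_of_copy_sup_edge ha hb (by simp) (by simp))
  rcases hv.2 with ⟨-, h⟩ | h
  · exact f.injective.ne (by simp)
      (h (f (foot false)) (f (foot true)) (hadj _) (hadj _) (hheavy _) (hheavy _))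
  · exact (h _ (hadj false)).1 (hheavy false)

theorem IsPendant.not_tip_mid (he : 2 ≤ e) (hu : IsPendant G u) (ha : f tip = v) : f mid ≠ u := by
  intro hb
  have hadj (b : Bool) : G.Adj (f body) (f (foot b)) := adj_of_copy_sup_edge ha hb
    (spider_adj_body_iff.2 (.inr ⟨b, rfl⟩)) (by simp)
  have hdeg (b : Bool) : 2 ≤ deg G (f (foot b)) := by
    have := (le_deg_spider_foot b).trans (deg_le_of_copy_sup_edge ha hb (by simp) (by simp))
    omega
  have hub : G.Adj (f mid) (f body) :=
    adj_of_copy_sup_edge ha hb (spider_adj_mid_iff.2 (.inl rfl)) (by simp)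
  rw [hb] at hub
  exact f.injective.ne (by simp)
    (hu.eq_of_adj (f body) (f (foot false)) (f (foot true)) hub (hadj _) (hadj _) (hdeg _) (hdeg _))

theorem IsAttachable.not_mid_tip (he : 2 ≤ e) (h : IsTame (spider e) (e + 1) G)
    (hv : IsAttachable e G v) (ha : f mid = v) : f tip ≠ u := by
  intro hb
  have hadj (b : Bool) : G.Adj (f body) (f (foot b)) := adj_of_copy_sup_edge ha hb
    (spider_adj_body_iff.2 (.inr ⟨b, rfl⟩)) (by simp)
  have hheavy (b : Bool) : e + 1 ≤ deg G (f (foot b)) :=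
    (le_deg_spider_foot b).trans (deg_le_of_copy_sup_edge ha hb (by simp) (by simp))
  have hbm : G.Adj (f body) (f mid) :=
    adj_of_copy_sup_edge ha hb (spider_adj_body_iff.2 (.inl rfl)) (by simp)
  rcases hv.2 with ⟨hvh, -⟩ | hlight
  · obtain ⟨g, hg, -⟩ := exists_copy_spider h hadj (f.injective.ne (by simp)) hheavy hbm
      (fun b => f.injective.ne (by simp)) (by rw [ha]; omega)
    exact hv.1 ⟨g, mid, hg.trans ha⟩
  · have hbody : 3 ≤ deg G (f body) :=
      three_le_deg_spider_body.trans (deg_le_of_copy_sup_edge ha hb (by simp) (by simp))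
    rw [ha] at hbm
    exact (hlight _ hbm.symm).2 hbody _ (hadj false) (hheavy false)

theorem IsAttachable.not_foot_toe (h : IsTame (spider e) (e + 1) G)
    (hv : IsAttachable e G v) {b : Bool} {i : Fin e} (ha : f (foot b) = v) : f (toe b i) ≠ u := by
  intro hb
  have hadj (b' : Bool) : G.Adj (f body) (f (foot b')) := adj_of_copy_sup_edge ha hb
    (spider_adj_body_iff.2 (.inr ⟨b', rfl⟩)) (by simp)
  have hother : e + 1 ≤ deg G (f (foot !b)) :=
    (le_deg_spider_foot _).trans (deg_le_of_copy_sup_edge ha hb (by simp) (by simp))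
  have hvb := (hadj b).symm
  rw [ha] at hvb
  rcases hv.2 with ⟨hvh, -⟩ | hlight
  · have hheavy (b' : Bool) : e + 1 ≤ deg G (f (foot b')) := by
      rcases Bool.eq_or_eq_not b' b with rfl | rfl
      · rwa [ha]
      · exact hother
    have hmid : 2 ≤ deg G (f mid) :=
      deg_spider_mid.symm.le.trans (deg_le_of_copy_sup_edge ha hb (by simp) (by simp))
    obtain ⟨g, -, hg⟩ := exists_copy_spider h hadj (f.injective.ne (by simp)) hheavy
      (adj_of_copy_sup_edge ha hb (spider_adj_body_iff.2 (.inl rfl)) (by simp))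
      (fun b => f.injective.ne (by simp)) hmid
    exact hv.1 ⟨g, foot b, (hg b).trans ha⟩
  · have hbody : 3 ≤ deg G (f body) :=
      three_le_deg_spider_body.trans (deg_le_of_copy_sup_edge ha hb (by simp) (by simp))
    exact (hlight _ hvb).2 hbody _ (hadj !b) hother

theorem IsAttachable.not_adj (he : 2 ≤ e) (h : IsTame (spider e) (e + 1) G)
    (hv : IsAttachable e G v) (hu : IsPendant G u) {a b : SpiderVertex e} (ha : f a = v)
    (hb : f b = u) : ¬ (spider e).Adj a b := by
  intro hab
  have hdeg : deg (spider e) b ≤ 2 := by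
    have h1 : _ ≤ deg _ (f b) := deg_le_deg_apply f b
    have h2 := deg_sup_edge_right_le G v u
    have h3 := hu.deg_le_one
    rw [hb] at h1
    omega
  rcases b with _ | _ | _ | b | ⟨b, i⟩
  · exact absurd (three_le_deg_spider_body (e := e)) (by omega)
  · rcases spider_adj_mid_iff.1 hab.symm with rfl | rfl
    · exact hv.not_body_mid ha hb
    · exact hu.not_tip_mid he ha hb
  · obtain rfl := spider_adj_tip_iff.1 hab.symm
    exact hv.not_mid_tip he h ha hb
  · exact absurd (le_deg_spider_foot (e := e) b) (by omega)
  · obtain rfl := spider_adj_toe_iff.1 hab.symm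
    exact hv.not_foot_toe h ha hb

end NewCopy

theorem exists_isTame_sup_edge_spider (he : 2 ≤ e) (h : IsTame (spider e) (e + 1) G)
    {D₁ D₂ : Set V} (hD : Disjoint D₁ D₂) (hD₁ : IsComponent G D₁) (hD₂ : IsComponent G D₂)
    (hforest : IsForestOn G D₂) (hcard : D₁.ncard ≠ Nat.card (SpiderVertex e)) :
    ∃ v ∈ D₁, ∃ u ∈ D₂, IsTame (spider e) (e + 1) (G ⊔ edge v u) := by
  obtain ⟨v, hv, hattach⟩ := exists_isAttachable he h hD₁ hcard
  obtain ⟨u, hu, hpend⟩ := hforest.exists_isPendant hD₂.nonempty hD₂.closed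
  exact ⟨v, hv, u, hu, h.sup_edge (by omega) hD₂.closed hu (hD.notMem_of_mem_left hv)
    hpend.deg_le_one hattach.1 (hattach.2.imp And.left fun hl y hy => (hl y hy).1)
    fun f a b ha hb => hattach.not_adj he h hpend ha hb⟩

end Spider

section TreeGadgets

theorem exists_gadget_of_tree {τ : Type} [Finite τ] {F : τ → τ} {root : τ} (hroot : F root = root)
    (rank : τ → ℕ) (hrank : ∀ a, a ≠ root → rank (F a) < rank a) {d : ℕ}
    (hpath : NoHeavyPath d (functionGraph F))
    (hjoin : JoinsTrees (Nat.card τ) fun {V} => IsTame (V := V) (functionGraph F) d) :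
    ∃ g : Gadget (Nat.card τ), JoinsTrees (Nat.card τ) g.Good :=
  have hT := connected_functionGraph rank hrank
  ⟨{ Good := IsTame (functionGraph F) d
     mono := fun ⟨φ⟩ h => h.of_copy φ
     size := tameSize τ d
     good_of_local := fun h => .of_local h hT
     τ := τ
     finite_τ := inferInstance
     card_τ := rfl
     par := F
     root := root
     par_root := hroot
     rank := rank
     rank_lt := hrank
     good_copies := fun _ => isTame_copies hT hroot rank hrank hpath
     not_good_copies_sup_edge := fun _ _ _ => not_isTame_copies_sup_edge
     exists_good_sup_edge := fun h D₁ D₂ hD hD₁ hD₂ _ hforest _ hcard =>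
      hjoin h D₁ D₂ hD hD₁ hD₂ hforest hcard.ne }, hjoin⟩

theorem exists_gadget_even {e : ℕ} (he : 2 ≤ e) :
    ∃ g : Gadget (2 * e + 2), JoinsTrees (2 * e + 2) g.Good := by
  have hcard : Nat.card (Bool × Option (Fin e)) = 2 * e + 2 := by
    simp only [Nat.card_eq_fintype_card, Fintype.card_prod, Fintype.card_bool, Fintype.card_option,
      Fintype.card_fin]
    ring
  rw [← hcard]
  exact exists_gadget_of_tree (F := doubleStarParent) rfl doubleStarRank doubleStarRank_lt
    (noHeavyPath_doubleStar.mono (by omega))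
    fun h _ _ => exists_isTame_sup_edge_doubleStar he h

theorem exists_gadget_odd {e : ℕ} (he : 2 ≤ e) :
    ∃ g : Gadget (2 * e + 5), JoinsTrees (2 * e + 5) g.Good := by
  rw [← SpiderVertex.card_eq]
  exact exists_gadget_of_tree (F := SpiderVertex.parent) rfl SpiderVertex.rank
    SpiderVertex.rank_parent_lt (noHeavyPath_spider.mono (by omega))
    fun h _ _ => exists_isTame_sup_edge_spider he h

end TreeGadgets

section StarGadget

variable {V W : Type*} {G : SimpleGraph V} {k : ℕ}

/-- Triangle-free with all components on fewer than `k` vertices, phrased by excluding connected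
sets of exactly `k` vertices so that it can be tested locally. -/
structure IsSmallTriangleFree (k : ℕ) (G : SimpleGraph V) : Prop where
  not_isCycleMap : ∀ f : ZMod 3 → V, ¬ IsCycleMap G f
  ncard_ne : ∀ S, (G.induce S).Connected → S.ncard ≠ k

theorem IsSmallTriangleFree.of_copy {H : SimpleGraph W} (h : IsSmallTriangleFree k G)
    (φ : H.Copy G) : IsSmallTriangleFree k H where
  not_isCycleMap f hf := h.not_isCycleMap _ (hf.map φ)
  ncard_ne S hS hk := by
    have hrange := connected_induce_range hS (φ.toHom.comp (Embedding.induce S).toHom)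
    refine h.ncard_ne _ hrange ((Nat.card_range_of_injective ?_).trans hk)
    exact φ.injective.comp Subtype.val_injective

theorem IsSmallTriangleFree.of_local
    (h : ∀ S : Set V, S.ncard ≤ k + 3 → (G.induce S).Connected →
      IsSmallTriangleFree k (G.induce S)) : IsSmallTriangleFree k G where
  not_isCycleMap f hf :=
    (h (Set.range f) (by rw [ncard_range_zmod hf.1]; omega)
      hf.connected_induce_range).not_isCycleMap _
      (hf.induce (S := Set.range f) fun i => ⟨i, rfl⟩)
  ncard_ne S hS hk :=
    (h S (by omega) hS).ncard_ne Set.univ ((induceUnivIso _).connected_iff.2 hS)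
      ((Set.ncard_univ _).trans hk)

theorem IsSmallTriangleFree.sup_edge [Finite V] (h : IsSmallTriangleFree k G) {D₁ D₂ : Set V}
    (hD : Disjoint D₁ D₂) (h₁ : AdjClosed G D₁) (h₂ : AdjClosed G D₂)
    (hlt : D₁.ncard + D₂.ncard < k) {v u : V} (hv : v ∈ D₁) (hu : u ∈ D₂) :
    IsSmallTriangleFree k (G ⊔ edge v u) where
  not_isCycleMap f hf :=
    h.not_isCycleMap f (hf.of_sup_edge le_rfl h₂ (hD.notMem_of_mem_left hv) hu)
  ncard_ne S hS hk := by
    have hclosed : AdjClosed (G ⊔ edge v u) (D₁ ∪ D₂) := by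
      intro x hx y hxy
      rcases sup_edge_adj.1 hxy with h | ⟨-, ⟨-, rfl⟩ | ⟨-, rfl⟩⟩
      · exact hx.imp (fun hx => h₁ x hx y h) fun hx => h₂ x hx y h
      · exact .inr hu
      · exact .inl hv
    by_cases hx : ∃ x ∈ S, x ∈ D₁ ∪ D₂
    · obtain ⟨x, hxS, hxD⟩ := hx
      have := (Set.ncard_le_ncard (hclosed.subset_of_connected hS hxS hxD)).trans
        (Set.ncard_union_le _ _)
      omega
    · push Not at hx
      have : G.induce S = (G ⊔ edge v u).induce S := by
        ext x y
        simp only [comap_adj, sup_edge_adj, Function.Embedding.subtype_apply]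
        refine ⟨.inl, Or.rec id ?_⟩
        rintro ⟨-, ⟨h, -⟩ | ⟨h, -⟩⟩
        · exact absurd (.inl (h ▸ hv)) (hx x x.2)
        · exact absurd (.inr (h ▸ hu)) (hx x x.2)
      exact h.ncard_ne S (this ▸ hS) hk

variable {ρ : ℕ}

/-- Parent map of the star with centre `none`. -/
def starParent (_ : Option (Fin ρ)) : Option (Fin ρ) := none

/-- The distance to the centre. -/
def starRank (a : Option (Fin ρ)) : ℕ := a.elim 0 fun _ => 1

theorem starRank_lt (a : Option (Fin ρ)) (ha : a ≠ none) :
    starRank (starParent a) < starRank a := by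
  obtain ⟨i, rfl⟩ := Option.ne_none_iff_exists'.1 ha
  exact one_pos

theorem ncard_range_mk {m : ℕ} (i : Fin m) :
    (Set.range (Prod.mk i : Option (Fin ρ) → _)).ncard = ρ + 1 := by
  rw [← Nat.card_coe_set_eq, Nat.card_range_of_injective (Prod.mk_right_injective i)]
  simp only [Nat.card_eq_fintype_card, Fintype.card_option, Fintype.card_fin]

theorem isSmallTriangleFree_copies (m : ℕ) :
    IsSmallTriangleFree (2 * (ρ + 1)) (functionGraph (copies m (starParent (ρ := ρ)))) where
  not_isCycleMap f hf := hf.not_isForestOn le_rfl <|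
    isForestOn_functionGraph (fun x => starRank x.2) fun x _ hx =>
      starRank_lt x.2 fun he => hx (Prod.ext rfl he.symm)
  ncard_ne S hS hcard := by
    obtain ⟨⟨i, a⟩, hx⟩ := hS.nonempty
    have hclosed : AdjClosed (functionGraph (copies m (starParent (ρ := ρ))))
        (Set.range (Prod.mk i)) := by
      rintro _ ⟨b, rfl⟩ ⟨j, c⟩ hy
      obtain ⟨rfl, -⟩ := functionGraph_copies_adj.1 hy
      exact ⟨c, rfl⟩
    have := Set.ncard_le_ncard (hclosed.subset_of_connected hS hx ⟨a, rfl⟩) (Set.toFinite _)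
    rw [ncard_range_mk] at this
    omega

theorem not_isSmallTriangleFree_copies_sup_edge {m : ℕ} {x y : Fin m × Option (Fin ρ)}
    (hxy : x ≠ y) (hadj : ¬ (functionGraph (copies m starParent)).Adj x y) :
    ¬ IsSmallTriangleFree (2 * (ρ + 1)) (functionGraph (copies m starParent) ⊔ edge x y) := by
  intro h
  have hnew : (functionGraph (copies m starParent) ⊔ edge x y).Adj x y :=
    sup_edge_adj.2 (.inr ⟨hxy, .inl ⟨rfl, rfl⟩⟩)
  by_cases hi : x.1 = y.1
  · obtain ⟨i, a⟩ := x
    obtain ⟨_, b⟩ := y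
    obtain rfl : i = _ := hi
    have hroot (c : Option (Fin ρ)) (hc : c ≠ none) :
        (functionGraph (copies m starParent) ⊔ edge (i, a) (i, b)).Adj (i, c) (i, none) :=
      .inl (functionGraph_copies_adj.2 ⟨rfl, hc, .inl rfl⟩)
    have ha : a ≠ none := by
      rintro rfl
      exact hadj ⟨hxy, .inr rfl⟩
    have hb : b ≠ none := by
      rintro rfl
      exact hadj ⟨hxy, .inl rfl⟩
    obtain ⟨f, hf⟩ := exists_isCycleMap_of_triangle hnew (hroot b hb) (hroot a ha).symm
    exact h.not_isCycleMap f hf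
  · have hfibre (i : Fin m) := (connected_induce_range
      (connected_functionGraph starRank starRank_lt)
      ((Hom.ofLE le_sup_left).comp (fibreCopy starParent i).toHom : _ →g
        functionGraph (copies m starParent) ⊔ edge x y)).preconnected
    refine h.ncard_ne _ (connected_induce_union (hfibre x.1) (hfibre y.1) ⟨x.2, rfl⟩ ⟨y.2, rfl⟩
      hnew) ?_
    have hdisj : Disjoint (Set.range (Prod.mk x.1 : Option (Fin ρ) → _))
        (Set.range (Prod.mk y.1)) := by
      rw [Set.disjoint_left]
      rintro _ ⟨b, rfl⟩ ⟨c, hc⟩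
      exact hi (congrArg Prod.fst hc).symm
    exact (Set.ncard_union_eq hdisj).trans (by rw [ncard_range_mk, ncard_range_mk, two_mul])

/-- The gadget whose tree is a star. -/
noncomputable def starGadget (ρ : ℕ) : Gadget (ρ + 1) where
  Good := IsSmallTriangleFree (2 * (ρ + 1))
  mono := fun ⟨φ⟩ h => h.of_copy φ
  size := 2 * (ρ + 1) + 3
  good_of_local := .of_local
  τ := Option (Fin ρ)
  finite_τ := inferInstance
  card_τ := by simp
  par := starParent
  root := none
  par_root := rfl
  rank := starRank
  rank_lt := starRank_lt
  good_copies := isSmallTriangleFree_copies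
  not_good_copies_sup_edge _ _ _ := not_isSmallTriangleFree_copies_sup_edge
  exists_good_sup_edge h D₁ D₂ hD h₁ h₂ _ _ hcard hlt :=
    have ⟨v, hv⟩ := h₁.nonempty
    have ⟨u, hu⟩ := h₂.nonempty
    ⟨v, hv, u, hu, h.sup_edge hD h₁.closed h₂.closed (by omega) hv hu⟩

end StarGadget

theorem exists_gadget (ρ : ℕ) : ∃ g : Gadget (ρ + 1),
    ρ + 1 ∉ ({1, 2, 3, 4, 5, 7} : Finset ℕ) → JoinsTrees (ρ + 1) g.Good := by
  by_cases hρ : ρ + 1 ∈ ({1, 2, 3, 4, 5, 7} : Finset ℕ)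
  · exact ⟨starGadget ρ, absurd hρ⟩
  · have hsmall : ρ + 1 = 6 ∨ 8 ≤ ρ + 1 := by
      simp only [Finset.mem_insert, Finset.mem_singleton, not_or] at hρ
      omega
    obtain ⟨g, hg⟩ : ∃ g : Gadget (ρ + 1), JoinsTrees (ρ + 1) g.Good := by
      rcases Nat.even_or_odd' (ρ + 1) with ⟨e, he | he⟩
      · obtain ⟨e, rfl⟩ := Nat.exists_eq_add_of_le' (show 3 ≤ e by omega)
        rw [he]
        exact exists_gadget_even (e := e + 2) (by omega)
      · obtain ⟨e, rfl⟩ := Nat.exists_eq_add_of_le' (show 4 ≤ e by omega)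
        rw [he]
        exact exists_gadget_odd (e := e + 2) (by omega)
    exact ⟨g, fun _ => hg⟩

section Saturation

variable {V W : Type} {𝓕 : GraphFam}

theorem exists_iso_fin [Finite V] (G : SimpleGraph V) :
    ∃ H : SimpleGraph (Fin (Nat.card V)), Nonempty (G ≃g H) :=
  ⟨_, ⟨Iso.map (Finite.equivFin V) G⟩⟩

theorem sup_edge_isContained_of_iso {G : SimpleGraph V} {H : SimpleGraph W} (e : G ≃g H)
    (u v : V) : G ⊔ edge u v ⊑ H ⊔ edge (e u) (e v) := by
  refine ⟨⟨⟨e, fun {x y} h => ?_⟩, e.injective⟩⟩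
  refine sup_edge_adj.2 ((sup_edge_adj.1 h).imp e.map_adj_iff.2 fun ⟨hxy, h⟩ => ?_)
  simpa only [ne_eq, e.injective.eq_iff] using ⟨hxy, h⟩

theorem FamSaturated.of_iso {G : SimpleGraph V} {H : SimpleGraph W} (e : G ≃g H)
    (h : FamSaturated 𝓕 G) : FamSaturated 𝓕 H := by
  simp only [FamSaturated, contains_iff_isContained] at h ⊢
  refine ⟨fun F hF hc => h.1 F hF (hc.trans e.symm.isContained), fun u v huv hadj => ?_⟩
  obtain ⟨F, hF, hc⟩ := h.2 (e.symm u) (e.symm v) (e.symm.injective.ne huv)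
    (mt e.symm.map_adj_iff.1 hadj)
  have := hc.trans (sup_edge_isContained_of_iso e (e.symm u) (e.symm v))
  rw [e.apply_symm_apply, e.apply_symm_apply] at this
  exact ⟨F, hF, this⟩

theorem sat_le_card_edgeSet [Finite V] {G : SimpleGraph V} (h : FamSaturated 𝓕 G) :
    sat (Nat.card V) 𝓕 ≤ Nat.card G.edgeSet := by
  obtain ⟨H, ⟨e⟩⟩ := exists_iso_fin G
  exact Nat.sInf_le ⟨H, h.of_iso e, (Nat.card_congr e.mapEdgeSet).symm⟩

theorem exists_famSaturated (h : ∀ F ∈ 𝓕, 1 ≤ Nat.card F.2.edgeSet) (V : Type) [Finite V] :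
    ∃ G : SimpleGraph V, FamSaturated 𝓕 G := by
  have hbot : ∀ F ∈ 𝓕, ¬ Contains (⊥ : SimpleGraph V) F.2 := by
    rintro F hF ⟨_, hf⟩
    obtain ⟨e⟩ := (Nat.card_pos_iff.1 (h F hF)).1
    obtain ⟨e, he⟩ := e
    induction e using Sym2.ind with | _ x y
    exact hf x y he
  obtain ⟨G, hG⟩ := (Set.toFinite {G : SimpleGraph V | ∀ F ∈ 𝓕, ¬ Contains G F.2}).exists_maximal
    ⟨_, hbot⟩
  refine ⟨G, hG.prop, fun u v huv hadj => ?_⟩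
  by_contra! hfree
  exact hadj (hG.le_of_ge hfree le_sup_left (sup_edge_adj.2 (.inr ⟨huv, .inl ⟨rfl, rfl⟩⟩)))

theorem exists_card_edgeSet_eq_sat (h : ∀ F ∈ 𝓕, 1 ≤ Nat.card F.2.edgeSet) (n : ℕ) :
    ∃ G : SimpleGraph (Fin n), FamSaturated 𝓕 G ∧ Nat.card G.edgeSet = sat n 𝓕 := by
  obtain ⟨G, hG⟩ := exists_famSaturated h (Fin n)
  exact Nat.sInf_mem (s := {m | ∃ G : SimpleGraph (Fin n), FamSaturated 𝓕 G ∧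
    Nat.card G.edgeSet = m}) ⟨_, G, hG, rfl⟩

theorem sat_le_sq (h : ∀ F ∈ 𝓕, 1 ≤ Nat.card F.2.edgeSet) (n : ℕ) : sat n 𝓕 ≤ n ^ 2 := by
  obtain ⟨G, -, hG⟩ := exists_card_edgeSet_eq_sat h n
  calc sat n 𝓕 = Nat.card G.edgeSet := hG.symm
    _ ≤ Nat.card (Sym2 (Fin n)) := Nat.card_le_card_of_injective _ Subtype.val_injective
    _ ≤ Nat.card (Fin n × Fin n) := Nat.card_le_card_of_surjective _ Sym2.mk_surjective
    _ = n ^ 2 := by rw [Nat.card_prod, Nat.card_fin, sq]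

end Saturation

section MinimalForbidden

/-- The family of vertex-minimal graphs without the property `P`; the graphs containing none of
them are those with the property, if `P` is monotone. -/
def minimalForbidden (P : {V : Type} → SimpleGraph V → Prop) : GraphFam :=
  {F | ¬ P F.2 ∧ ∀ S : Set (Fin F.1), S ≠ Set.univ → P (F.2.induce S)}

variable {V : Type} {P : {V : Type} → SimpleGraph V → Prop}

theorem forall_not_contains_minimalForbidden_iff (hP : IsMonotone P) [Finite V]
    {G : SimpleGraph V} : (∀ F ∈ minimalForbidden P, ¬ Contains G F.2) ↔ P G := by
  simp only [contains_iff_isContained]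
  refine ⟨fun h => ?_, fun hG F hF hc => hF.1 (hP hc hG)⟩
  by_contra hG
  obtain ⟨S, hS⟩ := (Set.toFinite {S : Set V | ¬ P (G.induce S)}).exists_minimal
    ⟨Set.univ, fun h => hG (hP (induceUnivIso G).symm.isContained h)⟩
  obtain ⟨H, ⟨e⟩⟩ := exists_iso_fin (G.induce S)
  refine h ⟨_, H⟩ ⟨fun h => hS.prop (hP e.isContained h), fun T hT => ?_⟩
    (e.symm.isContained.trans ⟨(Embedding.induce S).toCopy⟩)
  let φ : (H.induce T).Copy G :=
    (Embedding.induce S).toCopy.comp (e.symm.toCopy.comp (Embedding.induce T).toCopy)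
  have hφS : Set.range φ ⊆ S := Set.range_subset_iff.2 fun x => (e.symm x).2
  have hφ : ¬ S ⊆ Set.range φ := fun hS => hT <| Set.eq_univ_of_forall fun x => by
    obtain ⟨t, ht⟩ := hS (e.symm x).2
    have : t.1 = x := e.symm.injective (Subtype.ext ht)
    exact this ▸ t.2
  by_contra hPT
  exact hφ (hS.le_of_le (fun h => hPT (hP ⟨copyToInduce φ subset_rfl⟩ h)) hφS)

theorem famSaturated_minimalForbidden_iff (hP : IsMonotone P) [Finite V] {G : SimpleGraph V} :
    FamSaturated (minimalForbidden P) G ↔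
      P G ∧ ∀ u v, u ≠ v → ¬ G.Adj u v → ¬ P (G ⊔ edge u v) := by
  simp only [FamSaturated, ← forall_not_contains_minimalForbidden_iff hP, not_forall, not_not,
    exists_prop, edge]

theorem minimalForbidden_nonempty (hP : IsMonotone P) [Finite V] {G : SimpleGraph V}
    (hG : ¬ P G) : (minimalForbidden P).Nonempty := by
  contrapose! hG
  exact (forall_not_contains_minimalForbidden_iff hP).1 (by simp [hG])

theorem one_le_card_edgeSet_of_mem_minimalForbidden
    (hP : ∀ n, P (⊥ : SimpleGraph (Fin n))) {F : (n : ℕ) × SimpleGraph (Fin n)}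
    (hF : F ∈ minimalForbidden P) : 1 ≤ Nat.card F.2.edgeSet := by
  rw [Nat.one_le_iff_ne_zero, Nat.card_coe_set_eq, Ne, Set.ncard_eq_zero, edgeSet_eq_empty]
  intro h
  exact hF.1 (h ▸ hP F.1)

theorem minimalForbidden_finite {N : ℕ}
    (h : ∀ {V : Type} [Finite V] {G : SimpleGraph V},
      (∀ S : Set V, S.ncard ≤ N → P (G.induce S)) → P G) : (minimalForbidden P).Finite := by
  refine (Set.finite_range fun p : Σ k : Fin (N + 1), SimpleGraph (Fin k) =>
    (⟨p.1, p.2⟩ : (n : ℕ) × SimpleGraph (Fin n))).subset ?_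
  rintro ⟨k, F⟩ ⟨hF, hmin⟩
  suffices hk : k ≤ N from ⟨⟨⟨k, by omega⟩, F⟩, rfl⟩
  by_contra hk
  refine hF (h fun S hS => hmin S ?_)
  rintro rfl
  rw [Set.ncard_univ, Nat.card_fin] at hS
  exact hk hS

theorem quasiFinite_minimalForbidden
    (h : ∀ {V : Type} [Finite V] {G : SimpleGraph V},
      (∀ A B : Set V, (G.induce A).Connected → (G.induce B).Connected →
        P (G.induce (A ∪ B))) → P G) : QuasiFinite (minimalForbidden P) := by
  refine fun t T _ => ⟨2, fun F hF => ?_⟩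
  obtain ⟨A, B, hA, hB, hAB⟩ : ∃ A B, (F.2.induce A).Connected ∧ (F.2.induce B).Connected ∧
      A ∪ B = Set.univ := by
    by_contra! hne
    exact hF.1 (h fun A B hA hB => hF.2 _ (hne A B hA hB))
  obtain ⟨a⟩ := hA.nonempty
  obtain ⟨b⟩ := hB.nonempty
  have hsurj : Function.Surjective fun β : Bool =>
      F.2.connectedComponentMk (bif β then a else b) := by
    intro C
    induction C using ConnectedComponent.ind with | _ x
    rcases hAB.ge (Set.mem_univ x) with hx | hx
    · exact ⟨true, ConnectedComponent.sound
        ((hA.preconnected a ⟨x, hx⟩).map (Embedding.induce A).toHom)⟩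
    · exact ⟨false, ConnectedComponent.sound
        ((hB.preconnected b ⟨x, hx⟩).map (Embedding.induce B).toHom)⟩
  refine (Nat.card_le_card_of_injective _ Subtype.val_injective).trans ?_
  simpa using Nat.card_le_card_of_surjective _ hsurj

end MinimalForbidden

section Admissible

/-- The length of the cycle standing for the residue class of `c` modulo `ρ + 1`, where
`i = (ρ, c)`. It lies in that class, and determines `i` if `c ≤ ρ`. -/
def cycleLength (i : ℕ × ℕ) : ℕ := (i.1 + 1) * (i.1 + 4) + i.2

theorem four_le_cycleLength (i : ℕ × ℕ) : 4 ≤ cycleLength i := by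
  unfold cycleLength
  nlinarith [Nat.zero_le i.1, Nat.zero_le i.2]

theorem three_le_cycleLength (i : ℕ × ℕ) : 3 ≤ cycleLength i :=
  (Nat.le_succ 3).trans (four_le_cycleLength i)

instance (i : ℕ × ℕ) : NeZero (cycleLength i) := ⟨by have := four_le_cycleLength i; omega⟩

theorem cycleLength_mod {i : ℕ × ℕ} (hi : i.2 ≤ i.1) : cycleLength i % (i.1 + 1) = i.2 := by
  rw [cycleLength, Nat.mul_add_mod, Nat.mod_eq_of_lt (Nat.lt_succ_of_le hi)]

theorem cycleLength_injOn : Set.InjOn cycleLength {i | i.2 ≤ i.1} := by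
  rintro ⟨a, b⟩ hb ⟨c, d⟩ hd h
  simp only [Set.mem_ofPred_eq, cycleLength] at hb hd h
  rcases lt_trichotomy a c with hac | rfl | hac
  · nlinarith
  · rw [Nat.add_left_cancel h]
  · nlinarith

variable {V : Type} {G : SimpleGraph V}

theorem induce_sup_edge (G : SimpleGraph V) {S : Set V} (u v : S) :
    (G ⊔ edge u.1 v.1).induce S = G.induce S ⊔ edge u v := by
  ext x y
  simp only [comap_adj, sup_edge_adj, Function.Embedding.subtype_apply, Subtype.ext_iff, ne_eq]

/-- The property whose saturated graphs are counted: `G` has no triangle, a cycle of one of the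
lengths belonging to `I` is a component and meets every other such cycle, and what remains when it
is removed is good for the gadget of its modulus. -/
structure Admissible (gad : ∀ ρ : ℕ, Gadget (ρ + 1)) (I : Set (ℕ × ℕ)) (G : SimpleGraph V) :
    Prop where
  not_triangle : ∀ f : ZMod 3 → V, ¬ IsCycleMap G f
  isolated : ∀ i ∈ I, ∀ f : ZMod (cycleLength i) → V, IsCycleMap G f →
    ∀ k y, G.Adj (f k) y → y = f (k + 1) ∨ y = f (k - 1)
  meets : ∀ i ∈ I, ∀ j ∈ I, ∀ (f : ZMod (cycleLength i) → V) (g : ZMod (cycleLength j) → V),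
    IsCycleMap G f → IsCycleMap G g → ∃ a b, f a = g b
  good : ∀ i ∈ I, ∀ f : ZMod (cycleLength i) → V, IsCycleMap G f →
    (gad i.1).Good (G.induce (Set.range f)ᶜ)

/-- The sizes of the connected sets in whose unions a failure to be admissible can be found. -/
def IsLocalSize (gad : ∀ ρ : ℕ, Gadget (ρ + 1)) (I : Set (ℕ × ℕ)) (k : ℕ) : Prop :=
  k ≤ 3 ∨ ∃ i ∈ I, k ≤ cycleLength i + (gad i.1).size

variable {gad : ∀ ρ : ℕ, Gadget (ρ + 1)} {I : Set (ℕ × ℕ)}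

theorem isMonotone_admissible (gad : ∀ ρ : ℕ, Gadget (ρ + 1)) (I : Set (ℕ × ℕ)) :
    IsMonotone (Admissible gad I) := by
  rintro V W _ _ G H ⟨φ⟩ h
  refine ⟨fun f hf => h.not_triangle _ (hf.map φ), fun i hi f hf k y hy => ?_,
    fun i hi j hj f g hf hg => ?_, fun i hi f hf => ?_⟩
  · exact (h.isolated i hi _ (hf.map φ) k (φ y) (φ.toHom.map_adj hy)).imp
      (fun h => φ.injective h) fun h => φ.injective h
  · obtain ⟨a, b, hab⟩ := h.meets i hi j hj _ _ (hf.map φ) (hg.map φ)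
    exact ⟨a, b, φ.injective hab⟩
  · refine (gad i.1).mono ⟨copyToInduce (φ.comp (Embedding.induce _).toCopy) ?_⟩
      (h.good i hi _ (hf.map φ))
    rintro _ ⟨⟨x, hx⟩, rfl⟩ ⟨k, hk⟩
    exact hx ⟨k, φ.injective hk⟩

theorem admissible_bot : Admissible gad I (⊥ : SimpleGraph V) where
  not_triangle _ hf := hf.2 0
  isolated _ _ _ hf := (hf.2 0).elim
  meets _ _ _ _ _ _ hf := (hf.2 0).elim
  good _ _ _ hf := (hf.2 0).elim

theorem not_admissible_top : ¬ Admissible gad I (⊤ : SimpleGraph (ZMod 3)) := fun h =>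
  h.not_triangle id ⟨Function.injective_id, by decide⟩

theorem IsLocalSize.cycle {i : ℕ × ℕ} (hi : i ∈ I) {f : ZMod (cycleLength i) → V}
    (hf : IsCycleMap G f) : IsLocalSize gad I (Set.range f).ncard :=
  .inr ⟨i, hi, by rw [ncard_range_zmod hf.1]; omega⟩

private theorem good_compl_of_local [Finite V]
    (h : ∀ A B : Set V, (G.induce A).Connected → (G.induce B).Connected →
      IsLocalSize gad I A.ncard → IsLocalSize gad I B.ncard → Admissible gad I (G.induce (A ∪ B)))
    {i : ℕ × ℕ} (hi : i ∈ I) {f : ZMod (cycleLength i) → V} (hf : IsCycleMap G f) :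
    (gad i.1).Good (G.induce (Set.range f)ᶜ) := by
  refine (gad i.1).good_of_local fun T hT hconn => ?_
  let φ : ((G.induce (Set.range f)ᶜ).induce T).Copy G :=
    (Embedding.induce _).toCopy.comp (Embedding.induce T).toCopy
  have hcard : (Set.range φ).ncard = T.ncard := Nat.card_range_of_injective φ.injective
  have hadm := h (Set.range f) (Set.range φ) hf.connected_induce_range
    (connected_induce_range hconn φ.toHom) (.cycle hi hf) (.inr ⟨i, hi, by omega⟩)
  refine (gad i.1).mono ⟨copyToInduce (copyToInduce φ Set.subset_union_right) ?_⟩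
    (hadm.good i hi _ (hf.induce fun k => .inl ⟨k, rfl⟩))
  rintro _ ⟨x, rfl⟩ ⟨k, hk⟩
  exact x.1.2 ⟨k, congrArg Subtype.val hk⟩

theorem Admissible.of_local [Finite V]
    (h : ∀ A B : Set V, (G.induce A).Connected → (G.induce B).Connected →
      IsLocalSize gad I A.ncard → IsLocalSize gad I B.ncard →
      Admissible gad I (G.induce (A ∪ B))) : Admissible gad I G where
  not_triangle f hf :=
    have hA := hf.connected_induce_range
    have hcard : IsLocalSize gad I (Set.range f).ncard := .inl (ncard_range_zmod hf.1).le
    (h _ _ hA hA hcard hcard).not_triangle _ (hf.induce fun k => .inl ⟨k, rfl⟩)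
  isolated i hi f hf k y hy := by
    have hB : (G.induce {y}).Connected :=
      have : Nonempty ({y} : Set V) := ⟨⟨y, rfl⟩⟩
      ⟨induce_singleton_preconnected G y⟩
    have hadm := h _ {y} hf.connected_induce_range hB (.cycle hi hf) (.inl (by simp))
    exact (hadm.isolated i hi _ (hf.induce fun k => .inl ⟨k, rfl⟩) k ⟨y, .inr rfl⟩ hy).imp
      (congrArg Subtype.val) (congrArg Subtype.val)
  meets i hi j hj f g hf hg := by
    have hadm := h _ _ hf.connected_induce_range hg.connected_induce_range (.cycle hi hf)
      (.cycle hj hg)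
    obtain ⟨a, b, hab⟩ := hadm.meets i hi j hj _ _ (hf.induce fun k => .inl ⟨k, rfl⟩)
      (hg.induce fun k => .inr ⟨k, rfl⟩)
    exact ⟨a, b, congrArg Subtype.val hab⟩
  good _ hi _ hf := good_compl_of_local h hi hf

theorem Admissible.adjClosed_range (h : Admissible gad I G) {i : ℕ × ℕ} (hi : i ∈ I)
    {f : ZMod (cycleLength i) → V} (hf : IsCycleMap G f) : AdjClosed G (Set.range f) := by
  rintro _ ⟨k, rfl⟩ y hy
  rcases h.isolated i hi f hf k y hy with rfl | rfl
  exacts [⟨_, rfl⟩, ⟨_, rfl⟩]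

theorem Admissible.range_eq (h : Admissible gad I G) {i j : ℕ × ℕ} (hi : i ∈ I) (hj : j ∈ I)
    {f : ZMod (cycleLength i) → V} {g : ZMod (cycleLength j) → V} (hf : IsCycleMap G f)
    (hg : IsCycleMap G g) : Set.range f = Set.range g := by
  obtain ⟨a, b, hab⟩ := h.meets i hi j hj f g hf hg
  exact (hf.range_subset (h.adjClosed_range hj hg) (i := a) ⟨b, hab.symm⟩).antisymm
    (hg.range_subset (h.adjClosed_range hi hf) (i := b) ⟨a, hab⟩)

/-- The new edge is a bridge, so it creates no cycle. -/
theorem Admissible.sup_edge [Finite V] (hI : ∀ i ∈ I, i.2 ≤ i.1) (h : Admissible gad I G)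
    {i : ℕ × ℕ} (hi : i ∈ I) {f : ZMod (cycleLength i) → V} (hf : IsCycleMap G f)
    {D : Set V} (hD : AdjClosed G D) {u v : ↥(Set.range f)ᶜ} (hv : v.1 ∉ D) (hu : u.1 ∈ D)
    (hgood : (gad i.1).Good (G.induce (Set.range f)ᶜ ⊔ edge v u)) :
    Admissible gad I (G ⊔ edge v.1 u.1) where
  not_triangle g hg := h.not_triangle g (hg.of_sup_edge le_rfl hD hv hu)
  isolated j hj g hg k y hy := by
    replace hg := hg.of_sup_edge (three_le_cycleLength j) hD hv hu
    have hr := h.range_eq hj hi hg hf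
    rcases sup_edge_adj.1 hy with hy | ⟨-, ⟨hk, -⟩ | ⟨hk, -⟩⟩
    · exact h.isolated j hj g hg k y hy
    · exact absurd (hr.le ⟨k, hk⟩) v.2
    · exact absurd (hr.le ⟨k, hk⟩) u.2
  meets j hj j' hj' g g' hg hg' :=
    h.meets j hj j' hj' g g' (hg.of_sup_edge (three_le_cycleLength j) hD hv hu)
      (hg'.of_sup_edge (three_le_cycleLength j') hD hv hu)
  good j hj g hg := by
    replace hg := hg.of_sup_edge (three_le_cycleLength j) hD hv hu
    have hr := h.range_eq hj hi hg hf
    obtain rfl : j = i := by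
      apply cycleLength_injOn (hI j hj) (hI i hi)
      rw [← ncard_range_zmod hg.1, ← ncard_range_zmod hf.1, hr]
    rwa [hr, induce_sup_edge]

end Admissible

section Components

variable {V : Type} {G : SimpleGraph V} {D E K : Set V}

theorem isComponent_supp (C : G.ConnectedComponent) : IsComponent G C.supp where
  nonempty := C.nonempty_supp
  closed _ hx _ hxy := C.mem_supp_of_adj_mem_supp hx hxy
  minimal _ hD := fun ⟨_, hx⟩ hcl =>
    hD.antisymm fun _ hy => hcl.mem_of_reachable hx (C.reachable_of_mem_supp (hD hx) hy)

theorem IsComponent.disjoint (h : IsComponent G D) (h' : IsComponent G E) (hne : D ≠ E) :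
    Disjoint D E := by
  rw [Set.disjoint_iff_inter_eq_empty]
  by_contra hc
  have hcl : AdjClosed G (D ∩ E) := fun x hx y hxy =>
    ⟨h.closed x hx.1 y hxy, h'.closed x hx.2 y hxy⟩
  have hn := Set.nonempty_iff_ne_empty.2 hc
  exact hne ((h.minimal _ Set.inter_subset_left hn hcl).symm.trans
    (h'.minimal _ Set.inter_subset_right hn hcl))

theorem IsComponent.exists_supp_eq (h : IsComponent G D) :
    ∃ C : G.ConnectedComponent, C.supp = D := by
  obtain ⟨x, hx⟩ := h.nonempty
  refine ⟨G.connectedComponentMk x, ?_⟩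
  by_contra hne
  exact ((isComponent_supp _).disjoint h hne).notMem_of_mem_left rfl hx

theorem IsComponent.preimage_compl (h : IsComponent G D) (hd : Disjoint D K) :
    IsComponent (G.induce Kᶜ) (Subtype.val ⁻¹' D) where
  nonempty := by
    obtain ⟨x, hx⟩ := h.nonempty
    exact ⟨⟨x, hd.notMem_of_mem_left hx⟩, hx⟩
  closed x hx y hxy := h.closed x.1 hx y.1 hxy
  minimal := by
    intro D' hD' hne hcl
    have hval : AdjClosed G (Subtype.val '' D') := by
      rintro _ ⟨x, hx, rfl⟩ y hxy
      exact ⟨⟨y, hd.notMem_of_mem_left (h.closed _ (hD' hx) _ hxy)⟩, hcl x hx _ hxy, rfl⟩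
    rw [← h.minimal _ (Set.image_subset_iff.2 hD') (hne.image _) hval,
      Set.preimage_image_eq _ Subtype.val_injective]

theorem IsForestOn.preimage (h : IsForestOn G D) :
    IsForestOn (G.induce K) (Subtype.val ⁻¹' D) := by
  intro Z hZ hne
  obtain ⟨_, ⟨x, hx, rfl⟩, hx'⟩ := h (Subtype.val '' Z) (Set.image_subset_iff.2 hZ) (hne.image _)
  exact ⟨x, hx, fun y hy z hz hxy hxz =>
    Subtype.ext (hx' _ ⟨y, hy, rfl⟩ _ ⟨z, hz, rfl⟩ hxy hxz)⟩

theorem ncard_preimage_compl (hd : Disjoint D K) :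
    (Subtype.val ⁻¹' D : Set ↥Kᶜ).ncard = D.ncard :=
  Set.ncard_preimage_of_injective_subset_range Subtype.val_injective
    (by rw [Subtype.range_coe]; exact hd.subset_compl_right)

theorem exists_forall_adj_eq_of_isAcyclic [Finite V] [Nonempty V] (h : G.IsAcyclic) :
    ∃ x, ∀ y z, G.Adj x y → G.Adj x z → y = z := by
  classical
  have := Fintype.ofFinite V
  let v := Classical.arbitrary V
  let C := G.connectedComponentMk v
  have hT : C.toSimpleGraph.IsTree := h.isTree_connectedComponent C
  have lift {x y : V} (hx : x ∈ C.supp) (hxy : G.Adj x y) : y ∈ C :=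
    C.mem_supp_of_adj_mem_supp hx hxy
  rcases subsingleton_or_nontrivial C with hs | hn
  · exact ⟨v, fun y z hy hz =>
      congrArg Subtype.val (Subsingleton.elim (⟨y, lift rfl hy⟩ : C) ⟨z, lift rfl hz⟩)⟩
  · obtain ⟨x, hx⟩ := hT.exists_vert_degree_one_of_nontrivial
    rw [degree_eq_one_iff_existsUnique_adj] at hx
    exact ⟨x.1, fun y z hy hz => congrArg Subtype.val
      (hx.unique (y₁ := ⟨y, lift x.2 hy⟩) (y₂ := ⟨z, lift x.2 hz⟩) hy hz)⟩

theorem isForestOn_of_isAcyclic [Finite V] (h : (G.induce D).IsAcyclic) : IsForestOn G D := by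
  intro Z hZ hne
  have : Nonempty Z := hne.to_subtype
  have hac : (G.induce Z).IsAcyclic := h.embedding (induceHomOfLE G hZ)
  obtain ⟨x, hx⟩ := exists_forall_adj_eq_of_isAcyclic hac
  exact ⟨x.1, x.2, fun y hy z hz hxy hxz =>
    congrArg Subtype.val (hx ⟨y, hy⟩ ⟨z, hz⟩ hxy hxz)⟩

theorem IsForestOn.ne_range {s : ℕ} [NeZero s] (hs : 3 ≤ s) {f : ZMod s → V} (hD : IsForestOn G D)
    (hf : IsCycleMap G f) : D ≠ Set.range f := by
  rintro rfl
  exact hf.not_isForestOn hs hD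

theorem IsCycleMap.isComponent_range {s : ℕ} [NeZero s] {f : ZMod s → V} (hf : IsCycleMap G f)
    (h : AdjClosed G (Set.range f)) : IsComponent G (Set.range f) where
  nonempty := ⟨f 0, 0, rfl⟩
  closed := h
  minimal := by
    rintro D hD ⟨x, hx⟩ hcl
    obtain ⟨k, rfl⟩ := hD hx
    exact hD.antisymm (hf.range_subset hcl hx)

theorem card_eq_sum_ncard_supp [Finite V] (G : SimpleGraph V) [Fintype G.ConnectedComponent] :
    Nat.card V = ∑ C : G.ConnectedComponent, C.supp.ncard := by
  rw [Nat.card_congr (Equiv.sigmaFiberEquiv G.connectedComponentMk).symm, Nat.card_sigma]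
  rfl

theorem card_mod_eq_of_ncard_eq [Finite V] {r : ℕ} (hK : IsComponent G K)
    (h : ∀ D, IsComponent G D → D ≠ K → D.ncard = r) : Nat.card V % r = K.ncard % r := by
  classical
  have := Fintype.ofFinite G.ConnectedComponent
  obtain ⟨C₀, rfl⟩ := hK.exists_supp_eq
  have hC : ∀ C ∈ Finset.univ.erase C₀, C.supp.ncard = r := fun C hC =>
    h _ (isComponent_supp C) (ConnectedComponent.supp_injective.ne (Finset.ne_of_mem_erase hC))
  rw [card_eq_sum_ncard_supp G, ← Finset.add_sum_erase _ _ (Finset.mem_univ C₀),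
    Finset.sum_congr rfl hC, Finset.sum_const, smul_eq_mul, Nat.add_mul_mod_self_right]

end Components

section TwoTrees

variable {gad : ∀ ρ : ℕ, Gadget (ρ + 1)} {I : Set (ℕ × ℕ)} {V : Type} [Finite V]
  {G : SimpleGraph V} {D D' D₁ D₂ : Set V}

theorem exists_isCycleMap_of_famSaturated
    (h : FamSaturated (minimalForbidden (Admissible gad I)) G) (hD : AdjClosed G D) {u v : V}
    (hu : u ∈ D) (hv : v ∉ D) : ∃ i ∈ I, ∃ f : ZMod (cycleLength i) → V, IsCycleMap G f := by
  by_contra! hc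
  rw [famSaturated_minimalForbidden_iff (isMonotone_admissible gad I)] at h
  have hno {i} (hi : i ∈ I) {f : ZMod (cycleLength i) → V} (hf : IsCycleMap (G ⊔ edge v u) f) :
      False :=
    hc i hi f (hf.of_sup_edge (three_le_cycleLength i) hD hv hu)
  exact h.2 v u (by rintro rfl; exact hv hu) (fun hvu => hv (hD _ hu _ hvu.symm))
    { not_triangle f hf := h.1.not_triangle f (hf.of_sup_edge le_rfl hD hv hu)
      isolated i hi f hf := (hno hi hf).elim
      meets i hi _ _ f _ hf := (hno hi hf).elim
      good i hi f hf := (hno hi hf).elim }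

variable {i : ℕ × ℕ} {f : ZMod (cycleLength i) → V}

theorem not_exists_good_sup_edge (hI : ∀ i ∈ I, i.2 ≤ i.1)
    (h : FamSaturated (minimalForbidden (Admissible gad I)) G) (hi : i ∈ I) (hf : IsCycleMap G f)
    (hD' : AdjClosed G D') (hd : Disjoint D D') :
    ¬ ∃ v ∈ (Subtype.val ⁻¹' D : Set ↥(Set.range f)ᶜ), ∃ u ∈ Subtype.val ⁻¹' D',
      (gad i.1).Good (G.induce (Set.range f)ᶜ ⊔ edge v u) := by
  rintro ⟨v, hv, u, hu, hgood⟩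
  rw [famSaturated_minimalForbidden_iff (isMonotone_admissible gad I)] at h
  have hv' : v.1 ∉ D' := hd.notMem_of_mem_left hv
  exact h.2 v.1 u.1 (fun he => hv' (he ▸ hu)) (fun hvu => hv' (hD' _ hu _ hvu.symm))
    (h.1.sup_edge hI hi hf hD' hv' hu hgood)

theorem succ_le_ncard_of_two_forests (hI : ∀ i ∈ I, i.2 ≤ i.1)
    (h : FamSaturated (minimalForbidden (Admissible gad I)) G) (hi : i ∈ I) (hf : IsCycleMap G f)
    (h₁ : IsComponent G D₁) (h₂ : IsComponent G D₂) (hne : D₁ ≠ D₂) (ht₁ : IsForestOn G D₁)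
    (ht₂ : IsForestOn G D₂) (hcard : D₁.ncard = D₂.ncard) : i.1 + 1 ≤ D₁.ncard := by
  have hG := ((famSaturated_minimalForbidden_iff (isMonotone_admissible gad I)).1 h).1
  have hK := hf.isComponent_range (hG.adjClosed_range hi hf)
  have hd₁ := h₁.disjoint hK (ht₁.ne_range (three_le_cycleLength i) hf)
  have hd₂ := h₂.disjoint hK (ht₂.ne_range (three_le_cycleLength i) hf)
  have hd := h₁.disjoint h₂ hne
  by_contra! hlt
  refine not_exists_good_sup_edge hI h hi hf h₂.closed hd <|
    (gad i.1).exists_good_sup_edge (hG.good i hi f hf) _ _ (hd.preimage _)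
      (h₁.preimage_compl hd₁) (h₂.preimage_compl hd₂) ht₁.preimage ht₂.preimage ?_ ?_
  · rw [ncard_preimage_compl hd₁, ncard_preimage_compl hd₂, hcard]
  · rwa [ncard_preimage_compl hd₁]

theorem ncard_eq_of_joinsTrees (hI : ∀ i ∈ I, i.2 ≤ i.1)
    (h : FamSaturated (minimalForbidden (Admissible gad I)) G) (hi : i ∈ I) (hf : IsCycleMap G f)
    (hjoin : JoinsTrees (i.1 + 1) (gad i.1).Good) (hD : IsComponent G D) (hDf : D ≠ Set.range f)
    (hD' : IsComponent G D') (ht : IsForestOn G D') (hne : D ≠ D') : D.ncard = i.1 + 1 := by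
  have hG := ((famSaturated_minimalForbidden_iff (isMonotone_admissible gad I)).1 h).1
  have hK := hf.isComponent_range (hG.adjClosed_range hi hf)
  have hd := hD.disjoint hK hDf
  have hdd' := hD.disjoint hD' hne
  by_contra hcard
  refine not_exists_good_sup_edge hI h hi hf hD'.closed hdd' <|
    hjoin (hG.good i hi f hf) _ _ (hdd'.preimage _) (hD.preimage_compl hd)
      (hD'.preimage_compl (hD'.disjoint hK (ht.ne_range (three_le_cycleLength i) hf)))
      ht.preimage ?_
  rwa [ncard_preimage_compl hd]

theorem exists_index_of_two_forests (hI : ∀ i ∈ I, i.2 ≤ i.1)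
    (h : FamSaturated (minimalForbidden (Admissible gad I)) G) (h₁ : IsComponent G D₁)
    (h₂ : IsComponent G D₂) (hne : D₁ ≠ D₂) (ht₁ : IsForestOn G D₁) (ht₂ : IsForestOn G D₂)
    (hcard : D₁.ncard = D₂.ncard) : ∃ i ∈ I, i.1 + 1 ≤ D₁.ncard ∧
      (JoinsTrees (i.1 + 1) (gad i.1).Good → Nat.card V % (i.1 + 1) = i.2) := by
  obtain ⟨v, hv⟩ := h₁.nonempty
  obtain ⟨u, hu⟩ := h₂.nonempty
  obtain ⟨i, hi, f, hf⟩ := exists_isCycleMap_of_famSaturated h h₂.closed hu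
    ((h₁.disjoint h₂ hne).notMem_of_mem_left hv)
  refine ⟨i, hi, succ_le_ncard_of_two_forests hI h hi hf h₁ h₂ hne ht₁ ht₂ hcard, fun hjoin => ?_⟩
  have hG := ((famSaturated_minimalForbidden_iff (isMonotone_admissible gad I)).1 h).1
  have hall (D : Set V) (hD : IsComponent G D) (hDf : D ≠ Set.range f) : D.ncard = i.1 + 1 := by
    by_cases hD₂ : D = D₂
    · rw [hD₂, ← hcard]
      exact ncard_eq_of_joinsTrees hI h hi hf hjoin h₁ (ht₁.ne_range (three_le_cycleLength i) hf)
        h₂ ht₂ hne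
    · exact ncard_eq_of_joinsTrees hI h hi hf hjoin hD hDf h₂ ht₂ hD₂
  rw [card_mod_eq_of_ncard_eq (hf.isComponent_range (hG.adjClosed_range hi hf)) hall,
    ncard_range_zmod hf.1, cycleLength_mod (hI i hi)]

end TwoTrees

section Counting

variable {V : Type} [Finite V] {G : SimpleGraph V}

theorem ncard_supp_le (C : G.ConnectedComponent) [Decidable C.toSimpleGraph.IsTree] :
    C.supp.ncard ≤ Nat.card C.toSimpleGraph.edgeSet +
      if C.toSimpleGraph.IsTree then 1 else 0 := by
  have hle := C.connected_toSimpleGraph.card_vert_le_card_edgeSet_add_one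
  change C.supp.ncard ≤ _ at hle
  split_ifs with h
  · exact hle
  · refine Nat.le_of_lt_succ (hle.lt_of_ne fun he => h ?_)
    exact isTree_iff_connected_and_card.2 ⟨C.connected_toSimpleGraph, he.symm⟩

theorem sum_card_edgeSet_le (G : SimpleGraph V) [Fintype G.ConnectedComponent] :
    ∑ C : G.ConnectedComponent, Nat.card C.toSimpleGraph.edgeSet ≤ Nat.card G.edgeSet := by
  rw [← Nat.card_sigma]
  refine Nat.card_le_card_of_injective
    (fun p => p.1.toSimpleGraph_hom.mapEdgeSet p.2) ?_
  rintro ⟨C, ⟨e, he⟩⟩ ⟨C', ⟨e', he'⟩⟩ h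
  replace h : e.map Subtype.val = e'.map Subtype.val := congrArg Subtype.val h
  obtain rfl : C = C' := by
    obtain ⟨x, hx⟩ : ∃ x, x ∈ e := ⟨_, e.out_fst_mem⟩
    obtain ⟨z, -, hz⟩ := Sym2.mem_map.1 (h ▸ Sym2.mem_map.2 ⟨x, hx, rfl⟩)
    exact x.2.symm.trans ((congrArg G.connectedComponentMk hz.symm).trans z.2)
  obtain rfl := Sym2.map.injective Subtype.val_injective h
  rfl

theorem card_le_card_edgeSet_add_trees (G : SimpleGraph V) :
    Nat.card V ≤ Nat.card G.edgeSet +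
      {C : G.ConnectedComponent | C.toSimpleGraph.IsTree}.ncard := by
  classical
  have := Fintype.ofFinite G.ConnectedComponent
  rw [card_eq_sum_ncard_supp G]
  refine (Finset.sum_le_sum fun C _ => ncard_supp_le C).trans ?_
  rw [Finset.sum_add_distrib, Finset.sum_boole, Set.ncard_eq_toFinset_card', Set.toFinset_ofPred]
  exact add_le_add_left (sum_card_edgeSet_le G) _

theorem mul_ncard_large_components_le (G : SimpleGraph V) (r : ℕ) :
    r * {C : G.ConnectedComponent | r ≤ C.supp.ncard}.ncard ≤ Nat.card V := by
  classical
  have := Fintype.ofFinite G.ConnectedComponent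
  rw [card_eq_sum_ncard_supp G, Set.ncard_eq_toFinset_card', mul_comm, ← smul_eq_mul]
  exact (Finset.card_nsmul_le_sum _ (fun C => C.supp.ncard) r fun C hC => by
    simpa using hC).trans (Finset.sum_le_sum_of_subset (Finset.subset_univ _))

theorem mul_ncard_trees_le {r : ℕ}
    (h : ∀ C₁ C₂ : G.ConnectedComponent, C₁ ≠ C₂ → C₁.toSimpleGraph.IsTree →
      C₂.toSimpleGraph.IsTree → C₁.supp.ncard = C₂.supp.ncard → r ≤ C₁.supp.ncard) :
    r * {C : G.ConnectedComponent | C.toSimpleGraph.IsTree}.ncard ≤ r * r + Nat.card V := by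
  set small := {C : G.ConnectedComponent | C.toSimpleGraph.IsTree ∧ C.supp.ncard < r}
  set large := {C : G.ConnectedComponent | r ≤ C.supp.ncard}
  have hsplit : {C : G.ConnectedComponent | C.toSimpleGraph.IsTree} ⊆ small ∪ large := fun C hC =>
    (lt_or_ge C.supp.ncard r).imp (⟨hC, ·⟩) id
  have hsmall : small.ncard ≤ r := by
    have hinj : Set.InjOn (fun C : G.ConnectedComponent => C.supp.ncard) small :=
      fun C hC C' hC' he => by
        by_contra hne
        exact (h C C' hne hC.1 hC'.1 he).not_gt hC.2
    simpa [Set.ncard_eq_toFinset_card'] using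
      Set.ncard_le_ncard_of_injOn (t := Set.Iio r) _ (fun C hC => hC.2) hinj (Set.finite_Iio r)
  calc _ ≤ r * (small.ncard + large.ncard) :=
        Nat.mul_le_mul_left _ ((Set.ncard_le_ncard hsplit).trans (Set.ncard_union_le _ _))
    _ = r * small.ncard + r * large.ncard := mul_add ..
    _ ≤ _ := add_le_add (Nat.mul_le_mul_left _ hsmall) (mul_ncard_large_components_le G r)

end Counting

section LowerBound

variable {gad : ∀ ρ : ℕ, Gadget (ρ + 1)} {I : Set (ℕ × ℕ)}

theorem one_le_card_edgeSet_of_mem : ∀ F ∈ minimalForbidden (Admissible gad I),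
    1 ≤ Nat.card F.2.edgeSet :=
  fun _ => one_le_card_edgeSet_of_mem_minimalForbidden fun _ => admissible_bot

theorem mul_le_mul_sat_add (hI : ∀ i ∈ I, i.2 ≤ i.1) {n r : ℕ}
    (h : ∀ i ∈ I, i.1 + 1 < r →
      JoinsTrees (i.1 + 1) (gad i.1).Good ∧ n % (i.1 + 1) ≠ i.2) :
    r * n ≤ r * sat n (minimalForbidden (Admissible gad I)) + r * r + n := by
  obtain ⟨G, hG, hcard⟩ := exists_card_edgeSet_eq_sat (one_le_card_edgeSet_of_mem (gad := gad)) n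
  have hvert := card_le_card_edgeSet_add_trees G
  have htrees : r * {C : G.ConnectedComponent | C.toSimpleGraph.IsTree}.ncard ≤ r * r + n := by
    conv_rhs => rw [← Nat.card_fin n]
    refine mul_ncard_trees_le fun C₁ C₂ hne ht₁ ht₂ he => ?_
    by_contra! hlt
    obtain ⟨i, hi, hle, hmod⟩ := exists_index_of_two_forests hI hG (isComponent_supp C₁)
      (isComponent_supp C₂) (ConnectedComponent.supp_injective.ne hne)
      (isForestOn_of_isAcyclic ht₁.isAcyclic) (isForestOn_of_isAcyclic ht₂.isAcyclic) he
    obtain ⟨hjoin, hne⟩ := h i hi (hle.trans_lt hlt)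
    exact hne (Nat.card_fin n ▸ hmod hjoin)
  rw [Nat.card_fin, hcard] at hvert
  calc r * n ≤ r * _ := Nat.mul_le_mul_left _ hvert
    _ = r * sat n _ + r * _ := mul_add ..
    _ ≤ _ := by omega

end LowerBound

section Construction

variable {r s m : ℕ} {g : Gadget r}

/-- The graph of this map is the union of `m` copies of the tree of a gadget and a cycle of
length `s`. -/
def modelMap (g : Gadget r) (m s : ℕ) : (Fin m × g.τ) ⊕ ZMod s → (Fin m × g.τ) ⊕ ZMod s :=
  Sum.map (copies m g.par) (· + 1)

theorem modelMap_adj_inl {x : Fin m × g.τ} {y : (Fin m × g.τ) ⊕ ZMod s} :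
    (functionGraph (modelMap g m s)).Adj (.inl x) y ↔
      ∃ z, y = .inl z ∧ (functionGraph (copies m g.par)).Adj x z := by
  rcases y with y | y <;> simp [functionGraph, modelMap]

theorem modelMap_adj_inr (hs : 3 ≤ s) {x : ZMod s} {y : (Fin m × g.τ) ⊕ ZMod s} :
    (functionGraph (modelMap g m s)).Adj (.inr x) y ↔ y = .inr (x + 1) ∨ y = .inr (x - 1) := by
  have : Fact (1 < s) := ⟨by omega⟩
  rcases y with y | y
  · simp [functionGraph, modelMap]
  · simp only [functionGraph, modelMap, Sum.map_inr, Sum.inr.injEq, ne_eq, eq_sub_iff_add_eq]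
    refine ⟨fun h => h.2.imp_left Eq.symm, ?_⟩
    rintro (rfl | rfl)
    · simp
    · simp

theorem card_edgeSet_modelMap_le (g : Gadget r) (m s : ℕ) [NeZero s] :
    Nat.card (functionGraph (modelMap g m s)).edgeSet ≤ m * (r - 1) + s := by
  refine (card_edgeSet_functionGraph_le _).trans ?_
  have hsub : {x | modelMap g m s x ≠ x} ⊆
      Sum.inl '' (Set.univ ×ˢ {g.root}ᶜ) ∪ Set.range Sum.inr := by
    rintro (⟨i, a⟩ | x) hx
    · refine .inl ⟨(i, a), ⟨trivial, ?_⟩, rfl⟩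
      rintro rfl
      exact hx (by simp [modelMap, copies, g.par_root])
    · exact .inr ⟨x, rfl⟩
  refine (Set.ncard_le_ncard hsub (Set.toFinite _)).trans ((Set.ncard_union_le _ _).trans ?_)
  rw [Set.ncard_image_of_injective _ Sum.inl_injective, ncard_range_zmod Sum.inr_injective,
    Set.ncard_prod, Set.ncard_univ, Nat.card_fin, Set.ncard_compl, Set.ncard_singleton, g.card_τ]

theorem isForestOn_modelMap (g : Gadget r) (m s : ℕ) [NeZero s] :
    IsForestOn (functionGraph (modelMap g m s)) (Set.range Sum.inl) := by
  refine isForestOn_functionGraph (Sum.elim (fun x => g.rank x.2) 0) ?_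
  rintro _ ⟨⟨i, a⟩, rfl⟩ hx
  exact g.rank_lt a (by rintro rfl; exact hx (by simp [modelMap, copies, g.par_root]))

theorem adjClosed_modelMap (g : Gadget r) (m s : ℕ) :
    AdjClosed (functionGraph (modelMap g m s)) (Set.range Sum.inl) := by
  rintro _ ⟨x, rfl⟩ y hy
  obtain ⟨z, rfl, -⟩ := modelMap_adj_inl.1 hy
  exact ⟨z, rfl⟩

theorem isCycleMap_modelMap (g : Gadget r) (m : ℕ) (hs : 3 ≤ s) :
    IsCycleMap (functionGraph (modelMap g m s)) Sum.inr :=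
  ⟨Sum.inr_injective, fun _ => (modelMap_adj_inr hs).2 (.inl rfl)⟩

section CyclesOfModel

variable {t : ℕ} [NeZero s] [NeZero t] {f : ZMod t → (Fin m × g.τ) ⊕ ZMod s}

theorem IsCycleMap.exists_eq_inr (ht : 3 ≤ t)
    (hf : IsCycleMap (functionGraph (modelMap g m s)) f) (k : ZMod t) : ∃ x, f k = .inr x := by
  rcases hx : f k with x | x
  · have hsub := hf.range_subset (adjClosed_modelMap g m s) ⟨x, hx.symm⟩
    exact absurd (fun Z hZ => isForestOn_modelMap g m s Z (hZ.trans hsub)) (hf.not_isForestOn ht)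
  · exact ⟨x, rfl⟩

theorem IsCycleMap.eq_of_modelMap_adj (hs : 3 ≤ s) (ht : 3 ≤ t)
    (hf : IsCycleMap (functionGraph (modelMap g m s)) f) {k : ZMod t} {y}
    (hy : (functionGraph (modelMap g m s)).Adj (f k) y) : y = f (k + 1) ∨ y = f (k - 1) := by
  obtain ⟨x, hx⟩ := hf.exists_eq_inr ht k
  have hnext := hf.2 k
  have hprev := hf.adj_sub_one k
  have hne : f (k + 1) ≠ f (k - 1) := hf.1.ne (zmod_add_one_ne_sub_one ht k)
  rw [hx, modelMap_adj_inr hs] at hy hnext hprev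
  grind

theorem IsCycleMap.range_modelMap_eq (hs : 3 ≤ s) (ht : 3 ≤ t)
    (hf : IsCycleMap (functionGraph (modelMap g m s)) f) : Set.range f = Set.range Sum.inr := by
  have hsub : Set.range f ⊆ Set.range Sum.inr :=
    Set.range_subset_iff.2 fun k => (hf.exists_eq_inr ht k).imp fun _ => Eq.symm
  refine hsub.antisymm ?_
  obtain ⟨x, hx⟩ := hf.exists_eq_inr ht 0
  refine (isCycleMap_modelMap g m hs).range_subset (i := x) ?_ ⟨0, hx⟩
  rintro _ ⟨k, rfl⟩ y hy
  rcases hf.eq_of_modelMap_adj hs ht hy with rfl | rfl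
  exacts [⟨_, rfl⟩, ⟨_, rfl⟩]

theorem IsCycleMap.length_modelMap_eq (hs : 3 ≤ s) (ht : 3 ≤ t)
    (hf : IsCycleMap (functionGraph (modelMap g m s)) f) : t = s := by
  rw [← ncard_range_zmod hf.1, hf.range_modelMap_eq hs ht, ncard_range_zmod Sum.inr_injective]

end CyclesOfModel

theorem good_induce_modelMap (g : Gadget r) (m s : ℕ) [NeZero s] :
    g.Good ((functionGraph (modelMap g m s)).induce (Set.range Sum.inr)ᶜ) := by
  let φ : functionGraph (copies m g.par) ↪g functionGraph (modelMap g m s) :=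
    ⟨.inl, by simp [modelMap_adj_inl]⟩
  rw [Set.compl_range_inr]
  exact g.mono ⟨φ.isoInduceRange.symm.toCopy⟩ (g.good_copies m)

theorem not_good_induce_modelMap_sup_edge [NeZero s] {x y : Fin m × g.τ}
    (hne : (.inl x : (Fin m × g.τ) ⊕ ZMod s) ≠ .inl y)
    (hadj : ¬ (functionGraph (modelMap g m s)).Adj (.inl x) (.inl y)) :
    ¬ g.Good ((functionGraph (modelMap g m s) ⊔ edge (.inl x) (.inl y)).induce
      (Set.range Sum.inr)ᶜ) := by
  refine fun h => g.not_good_copies_sup_edge m x y (fun he => hne (congrArg _ he))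
    (fun h => hadj (modelMap_adj_inl.2 ⟨y, rfl, h⟩)) (g.mono ⟨copyToInduce ⟨⟨.inl, ?_⟩,
      Sum.inl_injective⟩ ?_⟩ h)
  · intro a b hab
    rw [sup_edge_adj] at hab ⊢
    refine hab.imp (fun h => modelMap_adj_inl.2 ⟨b, rfl, h⟩) ?_
    simp only [ne_eq, Sum.inl.injEq, imp_self]
  · rintro _ ⟨a, rfl⟩ ⟨b, hb⟩
    exact Sum.inr_ne_inl hb

variable {gad : ∀ ρ : ℕ, Gadget (ρ + 1)} {I : Set (ℕ × ℕ)} {i : ℕ × ℕ}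

theorem admissible_modelMap (hI : ∀ i ∈ I, i.2 ≤ i.1) (hi : i ∈ I) (m : ℕ) :
    Admissible gad I (functionGraph (modelMap (gad i.1) m (cycleLength i))) where
  not_triangle f hf := by
    have hlen := hf.length_modelMap_eq (three_le_cycleLength i) le_rfl
    have := four_le_cycleLength i
    omega
  isolated j _ f hf k y :=
    hf.eq_of_modelMap_adj (three_le_cycleLength i) (three_le_cycleLength j)
  meets j _ j' _ f f' hf hf' := by
    have hr := hf.range_modelMap_eq (three_le_cycleLength i) (three_le_cycleLength j)
    have hr' := hf'.range_modelMap_eq (three_le_cycleLength i) (three_le_cycleLength j')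
    obtain ⟨a, ha⟩ := hr.ge ⟨0, rfl⟩
    obtain ⟨b, hb⟩ := hr'.ge ⟨0, rfl⟩
    exact ⟨a, b, ha.trans hb.symm⟩
  good j hj f hf := by
    obtain rfl : j = i := cycleLength_injOn (hI j hj) (hI i hi)
      (hf.length_modelMap_eq (three_le_cycleLength i) (three_le_cycleLength j))
    rw [hf.range_modelMap_eq (three_le_cycleLength j) (three_le_cycleLength j)]
    exact good_induce_modelMap _ _ _

theorem not_admissible_modelMap_sup_edge (hi : i ∈ I) {u v}
    (huv : u ≠ v) (hadj : ¬ (functionGraph (modelMap (gad i.1) m (cycleLength i))).Adj u v) :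
    ¬ Admissible gad I (functionGraph (modelMap (gad i.1) m (cycleLength i)) ⊔ edge u v) := by
  intro h
  have hs := three_le_cycleLength i
  have hcyc : IsCycleMap (functionGraph (modelMap (gad i.1) m (cycleLength i)) ⊔ edge u v)
      Sum.inr := (isCycleMap_modelMap (gad i.1) m hs).map (Copy.ofLE _ _ le_sup_left)
  rcases u with u | u
  · rcases v with v | v
    · exact not_good_induce_modelMap_sup_edge huv hadj (h.good i hi _ hcyc)
    · exact hadj ((modelMap_adj_inr hs).2 (h.isolated i hi _ hcyc v _
        (sup_edge_adj.2 (.inr ⟨huv.symm, .inr ⟨rfl, rfl⟩⟩)))).symm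
  · exact hadj ((modelMap_adj_inr hs).2 (h.isolated i hi _ hcyc u _
      (sup_edge_adj.2 (.inr ⟨huv, .inl ⟨rfl, rfl⟩⟩))))

theorem famSaturated_modelMap (hI : ∀ i ∈ I, i.2 ≤ i.1) (hi : i ∈ I) (m : ℕ) :
    FamSaturated (minimalForbidden (Admissible gad I))
      (functionGraph (modelMap (gad i.1) m (cycleLength i))) :=
  (famSaturated_minimalForbidden_iff (isMonotone_admissible gad I)).2
    ⟨admissible_modelMap hI hi m, fun _ _ => not_admissible_modelMap_sup_edge hi⟩

theorem sat_le_of_eq (hI : ∀ i ∈ I, i.2 ≤ i.1) (hi : i ∈ I) {n : ℕ}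
    (hn : n = m * (i.1 + 1) + cycleLength i) :
    sat n (minimalForbidden (Admissible gad I)) ≤ m * i.1 + cycleLength i := by
  have hcard : Nat.card ((Fin m × (gad i.1).τ) ⊕ ZMod (cycleLength i)) = n := by
    rw [Nat.card_sum, Nat.card_prod, Nat.card_fin, Nat.card_zmod, (gad i.1).card_τ, hn]
  rw [← hcard]
  exact (sat_le_card_edgeSet (famSaturated_modelMap hI hi m)).trans
    (card_edgeSet_modelMap_le (gad i.1) m _)

theorem mul_sat_le (hI : ∀ i ∈ I, i.2 ≤ i.1) {ρ n : ℕ} (hi : (ρ, n % (ρ + 1)) ∈ I) :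
    (ρ + 1) * sat n (minimalForbidden (Admissible gad I)) ≤
      ρ * n + (ρ + 1) * ((ρ + 1) * (ρ + 5)) ^ 2 := by
  set s := cycleLength (ρ, n % (ρ + 1)) with hs
  have hmod : n % (ρ + 1) ≤ ρ := hI _ hi
  have hle : s ≤ ((ρ + 1) * (ρ + 5)) := by
    simp only [hs, cycleLength]
    nlinarith
  have hsq : s ^ 2 ≤ ((ρ + 1) * (ρ + 5)) ^ 2 := Nat.pow_le_pow_left hle 2
  rcases lt_or_ge n s with hn | hn
  · have hsat : sat n (minimalForbidden (Admissible gad I)) ≤ ((ρ + 1) * (ρ + 5)) ^ 2 :=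
      (sat_le_sq one_le_card_edgeSet_of_mem n).trans
        ((Nat.pow_le_pow_left hn.le 2).trans hsq)
    exact (Nat.mul_le_mul_left _ hsat).trans (Nat.le_add_left _ _)
  · have hdvd : ρ + 1 ∣ n - s :=
      (Nat.modEq_iff_dvd' hn).1 (cycleLength_mod (i := (ρ, n % (ρ + 1))) hmod)
    obtain ⟨m, hm⟩ := hdvd
    have hn' : n = m * (ρ + 1) + s := by rw [mul_comm]; omega
    have hss : s ≤ s ^ 2 := Nat.le_self_pow two_ne_zero s
    calc (ρ + 1) * sat n _ ≤ (ρ + 1) * (m * ρ + s) := Nat.mul_le_mul_left _ (sat_le_of_eq hI hi hn')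
      _ = ρ * (m * (ρ + 1)) + (ρ + 1) * s := by ring
      _ ≤ _ := by gcongr <;> omega

end Construction

section Family

variable {gad : ∀ ρ : ℕ, Gadget (ρ + 1)} {I : Set (ℕ × ℕ)}

theorem quasiFinite_minimalForbidden_admissible :
    QuasiFinite (minimalForbidden (Admissible gad I)) :=
  quasiFinite_minimalForbidden fun h => .of_local fun A B hA hB _ _ => h A B hA hB

theorem finite_minimalForbidden_admissible (hI : I.Finite) :
    (minimalForbidden (Admissible gad I)).Finite := by
  obtain ⟨N, hN⟩ := (hI.image fun i => cycleLength i + (gad i.1).size).bddAbove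
  have hlocal {k : ℕ} (hk : IsLocalSize gad I k) : k ≤ max 3 N := by
    rcases hk with hk | ⟨i, hi, hk⟩
    · exact hk.trans (le_max_left _ _)
    · exact hk.trans ((hN ⟨i, hi, rfl⟩).trans (le_max_right _ _))
  refine minimalForbidden_finite (N := max 3 N + max 3 N) fun h => .of_local
    fun A B _ _ hA hB => h _ ((Set.ncard_union_le _ _).trans (add_le_add (hlocal hA) (hlocal hB)))

end Family

section ResidueClasses

variable {S : ℕ → Set (Set ℕ)} {n r : ℕ}

/-- `r` is the smallest positive modulus for which `n` lies in one of the given residue classes. -/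
def IsLeastModulus (S : ℕ → Set (Set ℕ)) (n r : ℕ) : Prop :=
  (∃ C ∈ S r, n ∈ C) ∧ ∀ q : ℕ, 1 ≤ q → q < r → ∀ C ∈ S q, n ∉ C

/-- The pairs `(ρ, c)` such that the class of `c` modulo `ρ + 1` is one of the given residue
classes; moduli that are least for no number are left out, for the sake of finiteness. -/
def classIndices (S : ℕ → Set (Set ℕ)) : Set (ℕ × ℕ) :=
  {i | i.2 ≤ i.1 ∧ {n | n % (i.1 + 1) = i.2} ∈ S (i.1 + 1) ∧ ∃ n, IsLeastModulus S n (i.1 + 1)}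

theorem snd_le_fst_of_mem_classIndices : ∀ i ∈ classIndices S, i.2 ≤ i.1 := fun _ hi => hi.1

theorem IsLeastModulus.mem_classIndices (hS : ∀ r : ℕ, 1 ≤ r → ∀ C ∈ S r, ResidueClass r C)
    {ρ : ℕ} (h : IsLeastModulus S n (ρ + 1)) : (ρ, n % (ρ + 1)) ∈ classIndices S := by
  obtain ⟨C, hC, hn⟩ := h.1
  obtain ⟨c, -, rfl⟩ := hS _ ρ.succ_pos C hC
  obtain rfl : n % (ρ + 1) = c := hn
  exact ⟨Nat.le_of_lt_succ (Nat.mod_lt _ ρ.succ_pos), hC, n, h⟩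

theorem classIndices_finite (h : {r | 1 ≤ r ∧ ∃ n, IsLeastModulus S n r}.Finite) :
    (classIndices S).Finite := by
  obtain ⟨N, hN⟩ := h.bddAbove
  refine ((Set.finite_Iic N).prod (Set.finite_Iic N)).subset fun i hi => ?_
  have hfst : i.1 + 1 ≤ N := hN ⟨Nat.le_add_left 1 _, hi.2.2⟩
  have hsnd := hi.1
  exact ⟨Set.mem_Iic.2 (by omega), Set.mem_Iic.2 (by omega)⟩

theorem notMem_and_mod_ne_of_mem_classIndices {A : Set ℕ}
    (hA : ∀ r ∈ A, S r = ∅ ∨ S r = {C | ResidueClass r C}) {i : ℕ × ℕ} (hi : i ∈ classIndices S)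
    (hn : ∀ C ∈ S (i.1 + 1), n ∉ C) : i.1 + 1 ∉ A ∧ n % (i.1 + 1) ≠ i.2 := by
  refine ⟨fun hiA => ?_, hn _ hi.2.1⟩
  rcases hA _ hiA with h | h
  · exact (h ▸ hi.2.1 : _ ∈ (∅ : Set (Set ℕ)))
  · have hmem : {k | k % (i.1 + 1) = n % (i.1 + 1)} ∈ S (i.1 + 1) :=
      h ▸ ⟨_, Nat.mod_lt _ i.1.succ_pos, rfl⟩
    exact hn _ hmem rfl

end ResidueClasses

section Estimates

theorem abs_sub_one_sub_inv_mul_le {r n x T : ℕ} (hr : 1 ≤ r)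
    (hlow : r * n ≤ r * x + r * r + n) (hup : r * x ≤ (r - 1) * n + r * T) :
    |(x : ℝ) - (1 - 1 / (r : ℝ)) * n| ≤ r + T := by
  obtain ⟨ρ, rfl⟩ := Nat.exists_eq_add_of_le' hr
  have hpos : (0 : ℝ) < (ρ + 1 : ℕ) := by positivity
  have hscale : ((ρ + 1 : ℕ) : ℝ) * (x - (1 - 1 / ((ρ + 1 : ℕ) : ℝ)) * n) =
      (ρ + 1 : ℕ) * x - ρ * n := by
    field_simp
    push_cast
    ring
  rw [← mul_le_mul_iff_right₀ hpos, ← abs_of_pos hpos, ← abs_mul, abs_of_pos hpos, hscale, abs_le]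
  rw [Nat.add_sub_cancel] at hup
  have hlow' : ((_ : ℕ) : ℝ) ≤ ((_ : ℕ) : ℝ) := Nat.cast_le.2 hlow
  have hup' : ((_ : ℕ) : ℝ) ≤ ((_ : ℕ) : ℝ) := Nat.cast_le.2 hup
  push_cast at hlow' hup' ⊢
  have hT : (0 : ℝ) ≤ (ρ + 1) * T := by positivity
  constructor <;> nlinarith

/-- The case `r = ⌊√n⌋ + 1` of the lower bound balances its two error terms. -/
theorem sub_sqrt_le {n x : ℕ} (h : ∀ r, r * n ≤ r * x + r * r + n) :
    (n : ℝ) - 2 * (√n + 1) ≤ x := by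
  set s := Nat.sqrt n
  have hn : n ≤ (s + 1) * (s + 1) := (Nat.lt_succ_sqrt n).le
  have hle : (s + 1) * n ≤ (s + 1) * (x + 2 * (s + 1)) := by linarith [h (s + 1)]
  have hx : (n : ℝ) ≤ ((x + 2 * (s + 1) : ℕ) : ℝ) :=
    Nat.cast_le.2 (Nat.le_of_mul_le_mul_left hle s.succ_pos)
  have hs : (s : ℝ) ≤ √n := Real.nat_sqrt_le_real_sqrt
  push_cast at hx
  linarith

theorem tendsto_sqrt_div : Tendsto (fun n : ℕ => 2 * (√n + 1) / n) atTop (𝓝 0) := by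
  have heq : (fun n : ℕ => 2 * (√n + 1) / n) = fun n : ℕ => 2 * ((√n)⁻¹ + (n : ℝ)⁻¹) := by
    funext n
    rw [mul_div_assoc, add_div, Real.sqrt_div_self, one_div]
  rw [heq]
  have hsqrt : Tendsto (fun n : ℕ => (√n)⁻¹) atTop (𝓝 0) :=
    tendsto_inv_atTop_zero.comp (Real.tendsto_sqrt_atTop.comp tendsto_natCast_atTop_atTop)
  simpa using (hsqrt.add tendsto_inv_atTop_nhds_zero_nat).const_mul 2

end Estimates

/-- Converse: every admissible system of residue classes is realised by a quasi-finite family. -/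
theorem stmt10 (S : ℕ → Set (Set ℕ))
    (hS : ∀ r : ℕ, 1 ≤ r → ∀ C ∈ S r, ResidueClass r C)
    (h7 : ∀ r ∈ ({1, 2, 3, 4, 5, 7} : Set ℕ), S r = ∅ ∨ S r = {C | ResidueClass r C}) :
    ∃ 𝓕 : GraphFam, 𝓕.Nonempty ∧ (∀ F ∈ 𝓕, 1 ≤ Nat.card F.2.edgeSet) ∧ QuasiFinite 𝓕 ∧
      -- (a)
      (∀ r : ℕ, 1 ≤ r → ∃ K : ℝ, ∀ n : ℕ,
        ((∃ C ∈ S r, n ∈ C) ∧ ∀ q : ℕ, 1 ≤ q → q < r → ∀ C ∈ S q, n ∉ C) →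
          |(sat n 𝓕 : ℝ) - (1 - 1 / (r : ℝ)) * n| ≤ K) ∧
      -- (b)
      (∃ g : ℕ → ℝ, Tendsto (fun n : ℕ => g n / n) atTop (𝓝 0) ∧
        ∀ n : ℕ, (∀ r : ℕ, 1 ≤ r → ∀ C ∈ S r, n ∉ C) → (n : ℝ) - g n ≤ (sat n 𝓕 : ℝ)) ∧
      -- (c)
      ({r : ℕ | 1 ≤ r ∧ ∃ n : ℕ,
          (∃ C ∈ S r, n ∈ C) ∧ ∀ q : ℕ, 1 ≤ q → q < r → ∀ C ∈ S q, n ∉ C}.Finite →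
        𝓕.Finite) := by
  choose gad hjoin using exists_gadget
  have hlow (n r : ℕ) (hn : ∀ q : ℕ, 1 ≤ q → q < r → ∀ C ∈ S q, n ∉ C) :
      r * n ≤ r * sat n (minimalForbidden (Admissible gad (classIndices S))) + r * r + n :=
    mul_le_mul_sat_add snd_le_fst_of_mem_classIndices fun i hi hir =>
      (notMem_and_mod_ne_of_mem_classIndices h7 hi (hn _ i.1.succ_pos hir)).imp_left
        fun hi7 => hjoin i.1 (by simpa using hi7)
  refine ⟨minimalForbidden (Admissible gad (classIndices S)),
    minimalForbidden_nonempty (isMonotone_admissible _ _) not_admissible_top,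
    one_le_card_edgeSet_of_mem, quasiFinite_minimalForbidden_admissible, fun r hr => ?_,
    ⟨fun n => 2 * (√n + 1), tendsto_sqrt_div, fun n hn =>
      sub_sqrt_le fun r => hlow n r fun q hq _ => hn q hq⟩,
    fun hfin => finite_minimalForbidden_admissible (classIndices_finite hfin)⟩
  obtain ⟨ρ, rfl⟩ := Nat.exists_eq_add_of_le' hr
  exact ⟨_, fun n hn => abs_sub_one_sub_inv_mul_le hr (hlow n _ hn.2)
    (mul_sat_le snd_le_fst_of_mem_classIndices (IsLeastModulus.mem_classIndices hS hn))⟩
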